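/- arXiv:1112.5677 — 2 statements merged into one kernel-verified Lean document; each statement's English description precedes it below -/
import Mathlib

section
/- Let 1 < p < 2 and suppose ω(δ) = o(δ^{p−1}) as δ → +0. Let φ: ℝ → ℝ be a C^{1,ω}-smooth map of the circle into itself (φ is C¹ with φ′ ∈ Lip_ω(ℝ) and φ(t+2π) = φ(t) (mod 2π)) such that sup_{n∈ℤ} ‖e^{inφ}‖_{A_p(𝕋)} < ∞ (equivalently, φ acts from A(𝕋) to A_p(𝕋)). Then φ is linear: φ(t) = mt + t₀ (mod 2π) with m ∈ ℤ. -/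
open MeasureTheory Real Set
open scoped ENNReal

/-- The k-th Fourier coefficient of a (2π-periodic) function on the circle,
identified with a function on [0, 2π]. -/
noncomputable def fourierCoef (f : ℝ → ℂ) (k : ℤ) : ℂ :=
  (1 / (2 * (Real.pi : ℂ))) *
    ∫ t in (0:ℝ)..(2 * Real.pi), f t * Complex.exp (-Complex.I * (k : ℂ) * (t : ℂ))

/-- The A_p(𝕋) norm: ℓ^p norm of the sequence of Fourier coefficients
(valued in ℝ≥0∞ so that divergence gives ∞). -/
noncomputable def ApNorm (p : ℝ) (f : ℝ → ℂ) : ℝ≥0∞ :=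
  (∑' k : ℤ, ((‖fourierCoef f k‖₊ : ℝ≥0∞) ^ p)) ^ (1 / p)

/-!
Suppose `φ'` takes two values `α < β`. For each integer `k ∈ [nα, nβ]` choose `s` with `n φ' s = k`.
Near `s` the function `e^{inφ(t)}` is a constant multiple of `e^{ikt}` up to a phase error
`n η |t - s|^p` with `η` as small as we please, which is negligible on a window of width `N^{-1/2}`
when `N^{p/2}` is a large multiple of `n η`. Hence the `k`-th coefficient of the windowed function
is of order at least `N^{-1/2}`. The window `cos^{2N}(u/2)` is a convex combination of characters,
so by Jensen's inequality windowing, even with a window whose position depends on `k`, does not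
increase the `A_p` norm. Therefore the roughly `n (β - α)` integers `k` satisfy
`n (β - α) N^{-p/2} = O(B^p)`, and choosing `N^{p/2}` comparable to `n η` gives `β - α = O(B^p η)`.
-/

section FourierCoefficients

variable {f : ℝ → ℂ}

lemma fourierCoef_eq_integral_add (hf : Function.Periodic f (2 * π)) (k : ℤ) (s : ℝ) :
    fourierCoef f k = 1 / (2 * π) *
      ∫ u in (-π)..π, f (s + u) * Complex.exp (-Complex.I * k * (s + u : ℝ)) := by
  set g : ℝ → ℂ := fun t => f t * Complex.exp (-Complex.I * k * t)
  have hg : Function.Periodic g (2 * π) := by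
    refine hf.mul fun t => ?_
    rw [Complex.exp_eq_exp_iff_exists_int]
    exact ⟨-k, by push_cast; ring⟩
  have hshift : ∫ t in (0 : ℝ)..(2 * π), g t = ∫ u in (-π)..π, g (s + u) := by
    have h := hg.intervalIntegral_add_eq (s + -π) 0
    rw [zero_add, show s + -π + 2 * π = s + π by ring] at h
    rw [intervalIntegral.integral_comp_add_left g s, h]
  rw [fourierCoef, hshift]

lemma sum_norm_fourierCoef_rpow_le {p : ℝ} (hp : 0 < p) {B : NNReal} (hB : ApNorm p f ≤ B)
    (K : Finset ℤ) : ∑ k ∈ K, ‖fourierCoef f k‖ ^ p ≤ (B : ℝ) ^ p := by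
  have htsum : ∑' k : ℤ, (‖fourierCoef f k‖₊ : ℝ≥0∞) ^ p ≤ (B : ℝ≥0∞) ^ p :=
    (ENNReal.rpow_inv_le_iff hp).1 (one_div p ▸ hB)
  have hsum := (ENNReal.sum_le_tsum K).trans htsum
  simp only [← ENNReal.coe_rpow_of_nonneg _ hp.le] at hsum
  have hsum' : ∑ k ∈ K, ‖fourierCoef f k‖₊ ^ p ≤ B ^ p := by exact_mod_cast hsum
  simpa only [NNReal.coe_sum, NNReal.coe_rpow, coe_nnnorm] using NNReal.coe_le_coe.2 hsum'

/-- The trigonometric sum `∑ j ∈ S, a j e^{i ν j t}` with real coefficients. The windows used to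
localize are of this form, with weights `a j ≥ 0` of total mass `1`. -/
noncomputable def trigSum {ι : Type*} (S : Finset ι) (a : ι → ℝ) (ν : ι → ℤ) (t : ℝ) : ℂ :=
  ∑ j ∈ S, (a j : ℂ) * Complex.exp (Complex.I * ν j * t)

variable {ι : Type*} {S : Finset ι} {a : ι → ℝ} {ν : ι → ℤ}

lemma fourierCoef_mul_trigSum (hf : IntervalIntegrable f volume 0 (2 * π)) (s : ℝ) (k : ℤ) :
    fourierCoef (fun t => f t * trigSum S a ν (t - s)) k =
      ∑ j ∈ S, a j * Complex.exp (-Complex.I * ν j * s) * fourierCoef f (k - ν j) := by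
  have hexpand (t : ℝ) : f t * trigSum S a ν (t - s) * Complex.exp (-Complex.I * k * t) =
      ∑ j ∈ S, a j * Complex.exp (-Complex.I * ν j * s) *
        (f t * Complex.exp (-Complex.I * (k - ν j : ℤ) * t)) := by
    rw [trigSum, Finset.mul_sum, Finset.sum_mul]
    refine Finset.sum_congr rfl fun j _ => ?_
    have hexp : Complex.exp (Complex.I * ν j * (t - s : ℝ)) * Complex.exp (-Complex.I * k * t) =
        Complex.exp (-Complex.I * ν j * s) * Complex.exp (-Complex.I * (k - ν j : ℤ) * t) := by
      rw [← Complex.exp_add, ← Complex.exp_add]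
      push_cast
      ring_nf
    linear_combination f t * a j * hexp
  have hint (j : ι) : IntervalIntegrable
      (fun t => f t * Complex.exp (-Complex.I * (k - ν j : ℤ) * t)) volume 0 (2 * π) :=
    hf.mul_continuousOn (by fun_prop)
  simp only [fourierCoef, hexpand]
  rw [intervalIntegral.integral_finsetSum fun j _ => (hint j).const_mul _, Finset.mul_sum]
  refine Finset.sum_congr rfl fun j _ => ?_
  rw [intervalIntegral.integral_const_mul, mul_left_comm]

lemma norm_fourierCoef_mul_trigSum_le (hf : IntervalIntegrable f volume 0 (2 * π))
    (ha : ∀ j ∈ S, 0 ≤ a j) (s : ℝ) (k : ℤ) :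
    ‖fourierCoef (fun t => f t * trigSum S a ν (t - s)) k‖ ≤
      ∑ j ∈ S, a j * ‖fourierCoef f (k - ν j)‖ := by
  rw [fourierCoef_mul_trigSum hf]
  refine norm_sum_le_of_le S fun j hj => ?_
  have hphase : ‖Complex.exp (-Complex.I * ν j * s)‖ = 1 := by simp [Complex.norm_exp]
  rw [norm_mul, norm_mul, hphase, mul_one, Complex.norm_real, Real.norm_of_nonneg (ha j hj)]

lemma sum_norm_fourierCoef_mul_trigSum_rpow_le {p : ℝ} (hp : 1 ≤ p)
    (hf : IntervalIntegrable f volume 0 (2 * π)) {B : NNReal} (hB : ApNorm p f ≤ B)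
    (ha : ∀ j ∈ S, 0 ≤ a j) (ha_sum : ∑ j ∈ S, a j = 1) (s : ℤ → ℝ) (K : Finset ℤ) :
    ∑ k ∈ K, ‖fourierCoef (fun t => f t * trigSum S a ν (t - s k)) k‖ ^ p ≤ (B : ℝ) ^ p := by
  have hp0 : 0 < p := by linarith
  have hjensen (k : ℤ) : ‖fourierCoef (fun t => f t * trigSum S a ν (t - s k)) k‖ ^ p ≤
      ∑ j ∈ S, a j * ‖fourierCoef f (k - ν j)‖ ^ p :=
    (Real.rpow_le_rpow (norm_nonneg _) (norm_fourierCoef_mul_trigSum_le hf ha (s k) k) hp0.le).trans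
      (Real.rpow_arith_mean_le_arith_mean_rpow S a _ ha ha_sum (fun _ _ => norm_nonneg _) hp)
  have htranslate (c : ℤ) : ∑ k ∈ K, ‖fourierCoef f (k - c)‖ ^ p ≤ (B : ℝ) ^ p := by
    simpa only [Finset.sum_map, Equiv.toEmbedding_apply, Equiv.subRight_apply] using
      sum_norm_fourierCoef_rpow_le hp0 hB (K.map (Equiv.subRight c).toEmbedding)
  calc ∑ k ∈ K, ‖fourierCoef (fun t => f t * trigSum S a ν (t - s k)) k‖ ^ p
      ≤ ∑ k ∈ K, ∑ j ∈ S, a j * ‖fourierCoef f (k - ν j)‖ ^ p :=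
        Finset.sum_le_sum fun k _ => hjensen k
    _ = ∑ j ∈ S, a j * ∑ k ∈ K, ‖fourierCoef f (k - ν j)‖ ^ p := by
        simp only [Finset.sum_comm (s := K), Finset.mul_sum]
    _ ≤ ∑ j ∈ S, a j * (B : ℝ) ^ p :=
        Finset.sum_le_sum fun j hj => mul_le_mul_of_nonneg_left (htranslate (ν j)) (ha j hj)
    _ = (B : ℝ) ^ p := by rw [← Finset.sum_mul, ha_sum, one_mul]

end FourierCoefficients

section CosWindow

/-- The window `cos^{2N}(u/2) = ((1 + cos u) / 2)^N`, which concentrates near `0` at scale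
`N^{-1/2}` and is a convex combination of characters. -/
noncomputable def cosWindow (N : ℕ) (u : ℝ) : ℝ := cos (u / 2) ^ (2 * N)

variable (N : ℕ)

lemma cosWindow_nonneg (u : ℝ) : 0 ≤ cosWindow N u := (even_two_mul N).pow_nonneg _

@[fun_prop]
lemma continuous_cosWindow : Continuous (cosWindow N) := by
  unfold cosWindow
  fun_prop

lemma cosWindow_periodic : Function.Periodic (cosWindow N) (2 * π) := fun u => by
  rw [cosWindow, add_div, mul_div_cancel_left₀ π two_ne_zero, cos_add_pi, (even_two_mul N).neg_pow,
    cosWindow]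

lemma cosWindow_eq_trigSum (u : ℝ) :
    (cosWindow N u : ℂ) = trigSum (Finset.range (2 * N + 1))
      (fun m => (2 * N).choose m / 4 ^ N) (fun m => m - N) u := by
  rw [cosWindow, trigSum]
  push_cast
  rw [Complex.cos, div_pow, add_pow, Finset.sum_div]
  refine Finset.sum_congr rfl fun m hm => ?_
  have hm' : m ≤ 2 * N := Nat.lt_succ_iff.1 (Finset.mem_range.1 hm)
  have hexp : m * ((u : ℂ) / 2 * Complex.I) + ((2 * N : ℕ) - m) * (-((u : ℂ) / 2) * Complex.I) =
      Complex.I * (m - N) * u := by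
    push_cast
    ring
  rw [← Complex.exp_nat_mul, ← Complex.exp_nat_mul, ← Complex.exp_add, Nat.cast_sub hm', hexp,
    pow_mul]
  norm_num
  ring

lemma sum_choose_two_mul_div_four_pow :
    ∑ m ∈ Finset.range (2 * N + 1), ((2 * N).choose m / 4 ^ N : ℝ) = 1 := by
  have hsum : ∑ m ∈ Finset.range (2 * N + 1), ((2 * N).choose m : ℝ) = 4 ^ N := by
    exact_mod_cast (Nat.sum_range_choose (2 * N)).trans (pow_mul 2 2 N)
  rw [← Finset.sum_div, hsum, div_self (by positivity)]

lemma integral_sin_sq_mul_cosWindow :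
    ∫ u in (-π)..π, sin (u / 2) ^ 2 * cosWindow N u =
      (∫ u in (-π)..π, cosWindow N u) / (2 * (N + 1)) := by
  have hderiv (u : ℝ) : HasDerivAt (fun u => sin (u / 2) * cos (u / 2) ^ (2 * N + 1))
      (1 / 2 * cosWindow N u - (N + 1) * (sin (u / 2) ^ 2 * cosWindow N u)) u := by
    have hhalf : HasDerivAt (fun u : ℝ => u / 2) (1 / 2) u := (hasDerivAt_id u).div_const 2
    refine (hhalf.sin.mul (hhalf.cos.pow (2 * N + 1))).congr_deriv ?_
    simp only [Nat.add_sub_cancel, Pi.pow_apply, cosWindow]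
    push_cast
    linear_combination (1 / 2 * cos (u / 2) ^ (2 * N)) * cos_sq' (u / 2)
  have hFTC := intervalIntegral.integral_eq_sub_of_hasDerivAt (fun u _ => hderiv u)
    (Continuous.intervalIntegrable (by fun_prop) (-π) π)
  rw [intervalIntegral.integral_sub (Continuous.intervalIntegrable (by fun_prop) _ _)
    (Continuous.intervalIntegrable (by fun_prop) _ _), intervalIntegral.integral_const_mul,
    intervalIntegral.integral_const_mul, neg_div, cos_neg, cos_pi_div_two,
    zero_pow (Nat.succ_ne_zero _), mul_zero, mul_zero, sub_zero] at hFTC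
  field_simp
  linear_combination -2 * hFTC

lemma sq_le_pi_sq_mul_sin_half_sq {u : ℝ} (hu : |u| ≤ π) : u ^ 2 ≤ π ^ 2 * sin (u / 2) ^ 2 := by
  have hsin : 2 / π * |u / 2| ≤ |sin (u / 2)| :=
    Real.mul_abs_le_abs_sin (by rw [abs_div, abs_two]; linarith)
  rw [abs_div, abs_two, div_mul_div_comm, mul_comm 2, mul_div_mul_right _ _ two_ne_zero,
    div_le_iff₀' pi_pos] at hsin
  rw [← mul_pow, sq_le_sq, abs_mul, abs_of_pos pi_pos]
  exact hsin

lemma natCast_mul_integral_sq_mul_cosWindow_le :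
    N * ∫ u in (-π)..π, u ^ 2 * cosWindow N u ≤ 5 * ∫ u in (-π)..π, cosWindow N u := by
  set W := ∫ u in (-π)..π, cosWindow N u
  have hW : 0 ≤ W := intervalIntegral.integral_nonneg (by linarith [pi_pos])
    fun u _ => cosWindow_nonneg N u
  have hmoment : ∫ u in (-π)..π, u ^ 2 * cosWindow N u ≤ π ^ 2 * (W / (2 * (N + 1))) := by
    rw [← integral_sin_sq_mul_cosWindow, ← intervalIntegral.integral_const_mul]
    refine intervalIntegral.integral_mono_on (by linarith [pi_pos])
      (Continuous.intervalIntegrable (by fun_prop) _ _)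
      (Continuous.intervalIntegrable (by fun_prop) _ _) fun u hu => ?_
    rw [← mul_assoc]
    exact mul_le_mul_of_nonneg_right (sq_le_pi_sq_mul_sin_half_sq (abs_le.2 hu))
      (cosWindow_nonneg N u)
  have hpi : π ^ 2 ≤ 10 := by nlinarith [pi_lt_d2, pi_pos]
  calc N * ∫ u in (-π)..π, u ^ 2 * cosWindow N u
      ≤ (N + 1) * (10 * (W / (2 * (N + 1)))) := by
        refine (mul_le_mul_of_nonneg_left hmoment N.cast_nonneg).trans ?_
        gcongr
        linarith
    _ = 5 * W := by field_simp; ring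

lemma one_sub_natCast_mul_sq_div_four_le_cosWindow {u : ℝ} (hu : |u| ≤ 2) :
    1 - N * u ^ 2 / 4 ≤ cosWindow N u := by
  have hu4 : u ^ 2 ≤ 4 := by nlinarith [abs_le.1 hu]
  have hcos : 1 + -(u ^ 2 / 4) ≤ cos (u / 2) ^ 2 := by
    rw [cos_sq']
    linarith [sin_sq_le_sq (x := u / 2)]
  calc 1 - N * u ^ 2 / 4 = 1 + N * -(u ^ 2 / 4) := by ring
    _ ≤ (1 + -(u ^ 2 / 4)) ^ N := one_add_mul_le_pow (by linarith) N
    _ ≤ (cos (u / 2) ^ 2) ^ N := pow_le_pow_left₀ (by linarith) hcos N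
    _ = cosWindow N u := by rw [cosWindow, pow_mul]

variable {N}

lemma le_integral_cosWindow (hN : 1 ≤ N) : 3 / 2 * (√N)⁻¹ ≤ ∫ u in (-π)..π, cosWindow N u := by
  set r : ℝ := (√N)⁻¹
  have hr0 : 0 < r := by positivity
  have hr1 : r ≤ 1 := inv_le_one_of_one_le₀ (Real.one_le_sqrt.2 (by exact_mod_cast hN))
  have hrN : N * r ^ 2 = 1 := by
    rw [inv_pow, Real.sq_sqrt N.cast_nonneg]
    exact mul_inv_cancel₀ (by positivity)
  calc 3 / 2 * r = ∫ _ in (-r)..r, (3 / 4 : ℝ) := by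
        rw [intervalIntegral.integral_const, smul_eq_mul]
        ring
    _ ≤ ∫ u in (-r)..r, cosWindow N u := by
        refine intervalIntegral.integral_mono_on (by linarith)
          (Continuous.intervalIntegrable (by fun_prop) _ _)
          (Continuous.intervalIntegrable (by fun_prop) _ _) fun u hu => ?_
        have hwindow := one_sub_natCast_mul_sq_div_four_le_cosWindow N
          ((abs_le.2 hu).trans (by linarith))
        have hNu : N * u ^ 2 ≤ N * r ^ 2 :=
          mul_le_mul_of_nonneg_left (sq_le_sq' hu.1 hu.2) N.cast_nonneg
        linarith
    _ ≤ ∫ u in (-π)..π, cosWindow N u :=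
        intervalIntegral.integral_mono_interval (by linarith [pi_gt_three]) (by linarith)
          (by linarith [pi_gt_three]) (.of_forall (cosWindow_nonneg N))
          (Continuous.intervalIntegrable (by fun_prop) _ _)

end CosWindow

section Localization

lemma rpow_le_one_add_sq {x p : ℝ} (hx : 0 ≤ x) (hp0 : 0 ≤ p) (hp2 : p ≤ 2) :
    x ^ p ≤ 1 + x ^ 2 := by
  rcases le_total x 1 with h | h
  · linarith [Real.rpow_le_one hx h hp0, sq_nonneg x]
  · have hpow := Real.rpow_le_rpow_of_exponent_le h hp2
    rw [Real.rpow_two] at hpow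
    linarith

lemma rpow_half_mul_abs_rpow_le {M p : ℝ} (hM : 0 ≤ M) (hp0 : 0 ≤ p) (hp2 : p ≤ 2) (u : ℝ) :
    M ^ (p / 2) * |u| ^ p ≤ 1 + M * u ^ 2 := by
  have h := rpow_le_one_add_sq (x := √M * |u|) (by positivity) hp0 hp2
  rwa [Real.mul_rpow (by positivity) (by positivity), mul_pow, sq_abs, Real.sq_sqrt hM,
    Real.sqrt_eq_rpow, ← Real.rpow_mul hM, one_div_mul_eq_div] at h

variable {p η δ₀ : ℝ} {N : ℕ}

lemma norm_exp_I_mul_sub_one_le_of_abs_le_rpow {R : ℝ → ℝ} (hp0 : 0 ≤ p) (hp2 : p ≤ 2)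
    (hδ₀ : 0 ≤ δ₀) (hR : ∀ u, |u| < δ₀ → |R u| ≤ η * |u| ^ p)
    (hηN : 12 * η ≤ (N : ℝ) ^ (p / 2)) (hN : 24 ≤ N * δ₀ ^ 2) (u : ℝ) :
    ‖Complex.exp (Complex.I * R u) - 1‖ ≤ 1 / 12 * (1 + N * u ^ 2) := by
  rcases lt_or_ge |u| δ₀ with hu | hu
  · calc ‖Complex.exp (Complex.I * R u) - 1‖ ≤ |R u| := Real.norm_exp_I_mul_ofReal_sub_one_le
      _ ≤ η * |u| ^ p := hR u hu
      _ ≤ 1 / 12 * (N ^ (p / 2) * |u| ^ p) := by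
          nlinarith [Real.rpow_nonneg (abs_nonneg u) p]
      _ ≤ 1 / 12 * (1 + N * u ^ 2) := by
          gcongr
          exact rpow_half_mul_abs_rpow_le N.cast_nonneg hp0 hp2 u
  · have hNu : N * δ₀ ^ 2 ≤ N * u ^ 2 := by
      rw [← sq_abs u]
      gcongr
    have htwo : ‖Complex.exp (Complex.I * R u) - 1‖ ≤ 2 := by
      refine (norm_sub_le _ _).trans_eq ?_
      rw [Complex.norm_exp_I_mul_ofReal, norm_one, one_add_one_eq_two]
    linarith

-- `1 / 12` is `1 / (2 * (1 + 5))`, where `5` is the constant of the second moment bound.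
lemma half_integral_cosWindow_le_norm {R : ℝ → ℝ} (hRc : Continuous R)
    (hR : ∀ u, ‖Complex.exp (Complex.I * R u) - 1‖ ≤ 1 / 12 * (1 + N * u ^ 2)) :
    (∫ u in (-π)..π, cosWindow N u) / 2 ≤
      ‖∫ u in (-π)..π, Complex.exp (Complex.I * R u) * cosWindow N u‖ := by
  set W := ∫ u in (-π)..π, cosWindow N u with hW
  set J := ∫ u in (-π)..π, Complex.exp (Complex.I * R u) * cosWindow N u with hJ
  have hpointwise (u : ℝ) : ‖Complex.exp (Complex.I * R u) * cosWindow N u - cosWindow N u‖ ≤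
      1 / 12 * (cosWindow N u + N * (u ^ 2 * cosWindow N u)) := by
    rw [← sub_one_mul, norm_mul, Complex.norm_real, Real.norm_of_nonneg (cosWindow_nonneg N u)]
    linarith [mul_le_mul_of_nonneg_right (hR u) (cosWindow_nonneg N u)]
  have hclose : ‖J - W‖ ≤ W / 2 := by
    calc ‖J - W‖
        = ‖∫ u in (-π)..π, (Complex.exp (Complex.I * R u) * cosWindow N u - cosWindow N u)‖ := by
          rw [hW, hJ, ← intervalIntegral.integral_ofReal, intervalIntegral.integral_sub
            (Continuous.intervalIntegrable (by fun_prop) _ _)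
            (Continuous.intervalIntegrable (by fun_prop) _ _)]
      _ ≤ ∫ u in (-π)..π, 1 / 12 * (cosWindow N u + N * (u ^ 2 * cosWindow N u)) :=
          intervalIntegral.norm_integral_le_of_norm_le (by linarith [pi_pos])
            (.of_forall fun u _ => hpointwise u) (Continuous.intervalIntegrable (by fun_prop) _ _)
      _ = 1 / 12 * (W + N * ∫ u in (-π)..π, u ^ 2 * cosWindow N u) := by
          rw [intervalIntegral.integral_const_mul, intervalIntegral.integral_add
            (Continuous.intervalIntegrable (by fun_prop) _ _)
            (Continuous.intervalIntegrable (by fun_prop) _ _), intervalIntegral.integral_const_mul]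
      _ ≤ W / 2 := by linarith [natCast_mul_integral_sq_mul_cosWindow_le N]
  have htriangle := norm_sub_norm_le (W : ℂ) J
  rw [norm_sub_rev, Complex.norm_real] at htriangle
  linarith [Real.le_norm_self W]

variable {ψ : ℝ → ℝ}

lemma norm_fourierCoef_mul_cosWindow
    (hψ : Function.Periodic (fun t => Complex.exp (Complex.I * ψ t)) (2 * π)) (s : ℝ) (k : ℤ) :
    ‖fourierCoef (fun t => Complex.exp (Complex.I * ψ t) * cosWindow N (t - s)) k‖ =
      1 / (2 * π) * ‖∫ u in (-π)..π,
        Complex.exp (Complex.I * (ψ (s + u) - ψ s - k * u : ℝ)) * cosWindow N u‖ := by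
  have hperiodic : Function.Periodic
      (fun t => Complex.exp (Complex.I * ψ t) * (cosWindow N (t - s) : ℂ)) (2 * π) :=
    hψ.mul fun t => by rw [add_sub_right_comm, cosWindow_periodic]
  have hfactor (u : ℝ) : Complex.exp (Complex.I * ψ (s + u)) * cosWindow N (s + u - s) *
        Complex.exp (-Complex.I * k * (s + u : ℝ)) =
      Complex.exp (Complex.I * (ψ s - k * s : ℝ)) *
        (Complex.exp (Complex.I * (ψ (s + u) - ψ s - k * u : ℝ)) * cosWindow N u) := by
    rw [add_sub_cancel_left, mul_right_comm, ← mul_assoc, ← Complex.exp_add, ← Complex.exp_add]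
    push_cast
    ring_nf
  simp only [fourierCoef_eq_integral_add hperiodic k s, hfactor]
  rw [intervalIntegral.integral_const_mul, norm_mul, norm_mul, Complex.norm_exp_I_mul_ofReal,
    one_mul]
  simp [abs_of_pos pi_pos]

lemma le_norm_fourierCoef_mul_cosWindow (hψc : Continuous ψ)
    (hψ : Function.Periodic (fun t => Complex.exp (Complex.I * ψ t)) (2 * π)) (hN1 : 1 ≤ N)
    {s : ℝ} {k : ℤ} (hR : ∀ u, ‖Complex.exp (Complex.I * (ψ (s + u) - ψ s - k * u : ℝ)) - 1‖ ≤
      1 / 12 * (1 + N * u ^ 2)) :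
    1 / 10 * (√N)⁻¹ ≤
      ‖fourierCoef (fun t => Complex.exp (Complex.I * ψ t) * cosWindow N (t - s)) k‖ := by
  have hhalf := half_integral_cosWindow_le_norm (by fun_prop) hR
  have hmass := le_integral_cosWindow hN1
  have hinv : 0 ≤ (√(N : ℝ))⁻¹ := by positivity
  rw [norm_fourierCoef_mul_cosWindow hψ, one_div_mul_eq_div (2 * π), le_div_iff₀ (by positivity)]
  nlinarith [pi_lt_d2]

theorem card_le_of_ApNorm_exp_le (hp1 : 1 ≤ p) (hp2 : p ≤ 2) (hψc : Continuous ψ)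
    (hψ : Function.Periodic (fun t => Complex.exp (Complex.I * ψ t)) (2 * π)) {B : NNReal}
    (hB : ApNorm p (fun t => Complex.exp (Complex.I * ψ t)) ≤ B)
    (hδ₀ : 0 ≤ δ₀) (hηN : 12 * η ≤ (N : ℝ) ^ (p / 2)) (hN : 24 ≤ N * δ₀ ^ 2) {K : Finset ℤ}
    (hK : ∀ k ∈ K, ∃ s, ∀ u, |u| < δ₀ → |ψ (s + u) - ψ s - k * u| ≤ η * |u| ^ p) :
    (K.card : ℝ) ≤ (10 * B) ^ p * (N : ℝ) ^ (p / 2) := by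
  have hN1 : 1 ≤ N := by
    by_contra! h
    norm_num [Nat.lt_one_iff.1 h] at hN
  choose! s hs using hK
  have hlower : ∀ k ∈ K, (1 / 10 * (√N)⁻¹) ^ p ≤
      ‖fourierCoef (fun t => Complex.exp (Complex.I * ψ t) * cosWindow N (t - s k)) k‖ ^ p := by
    intro k hk
    refine Real.rpow_le_rpow (by positivity) ?_ (by linarith)
    exact le_norm_fourierCoef_mul_cosWindow hψc hψ hN1
      (norm_exp_I_mul_sub_one_le_of_abs_le_rpow (by linarith) hp2 hδ₀ (hs k hk) hηN hN)
  have hupper := sum_norm_fourierCoef_mul_trigSum_rpow_le hp1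
    (Continuous.intervalIntegrable (by fun_prop) _ _) hB
    (a := fun m => ((2 * N).choose m / 4 ^ N : ℝ)) (ν := fun m => m - N)
    (fun m _ => by positivity) (sum_choose_two_mul_div_four_pow N) s K
  simp only [← cosWindow_eq_trigSum] at hupper
  have hcard : K.card * (1 / 10 * (√N)⁻¹) ^ p ≤ (B : ℝ) ^ p := by
    rw [← nsmul_eq_mul]
    exact (Finset.card_nsmul_le_sum K _ _ hlower).trans hupper
  have hscale : (1 / 10 * (√(N : ℝ))⁻¹) ^ p = (10 ^ p * (N : ℝ) ^ (p / 2))⁻¹ := by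
    rw [one_div, ← mul_inv, Real.inv_rpow (by positivity), Real.mul_rpow (by norm_num)
      (by positivity), Real.sqrt_eq_rpow, ← Real.rpow_mul N.cast_nonneg, one_div_mul_eq_div]
  rw [hscale, ← div_eq_mul_inv, div_le_iff₀ (by positivity)] at hcard
  rw [Real.mul_rpow (by norm_num) B.coe_nonneg]
  linarith

end Localization

section DerivativeGap

lemma periodic_exp_I_mul {φ : ℝ → ℝ} {c : ℝ} (n : ℤ)
    (hφ : ∀ t, ∃ k : ℤ, φ (t + c) - φ t = 2 * π * k) :
    Function.Periodic (fun t => Complex.exp (Complex.I * (n * φ t : ℝ))) c := by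
  intro t
  obtain ⟨k, hk⟩ := hφ t
  rw [Complex.exp_eq_exp_iff_exists_int, eq_add_of_sub_eq hk]
  exact ⟨n * k, by push_cast; ring⟩

lemma sub_sub_one_le_card_Icc_ceil_floor (a b : ℝ) :
    b - a - 1 ≤ ((Finset.Icc ⌈a⌉ ⌊b⌋).card : ℝ) := by
  have hcard : ((⌊b⌋ + 1 - ⌈a⌉ : ℤ) : ℝ) ≤ ((Finset.Icc ⌈a⌉ ⌊b⌋).card : ℝ) := by
    rw [Int.card_Icc]
    exact_mod_cast Int.self_le_toNat _
  push_cast at hcard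
  linarith [Int.lt_floor_add_one b, Int.ceil_lt_add_one a]

lemma exists_mul_deriv_eq {φ : ℝ → ℝ} (hφ : Differentiable ℝ φ) {x y c z : ℝ}
    (hz : z ∈ Icc (c * deriv φ x) (c * deriv φ y)) : ∃ s, c * deriv φ s = z := by
  have hderiv (t : ℝ) : deriv (fun t => c * φ t) t = c * deriv φ t := deriv_const_mul c (hφ t)
  have hdarboux := (ordConnected_univ (α := ℝ)).image_deriv fun t _ => (hφ t).const_mul c
  rw [← hderiv, ← hderiv] at hz
  obtain ⟨s, -, hs⟩ := hdarboux.out (mem_image_of_mem _ (mem_univ x))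
    (mem_image_of_mem _ (mem_univ y)) hz
  exact ⟨s, (hderiv s).symm.trans hs⟩

lemma exists_nat_rpow_mem_Icc {q y : ℝ} (hq0 : 0 < q) (hq1 : q ≤ 1) (hy : 1 ≤ y) :
    ∃ N : ℕ, y ≤ N ∧ (N : ℝ) ^ q ∈ Icc y (2 * y) := by
  set z := y ^ q⁻¹
  have hzq : z ^ q = y := Real.rpow_inv_rpow (by linarith) hq0.ne'
  have hyz : y ≤ z := Real.self_le_rpow_of_one_le hy ((one_le_inv₀ hq0).2 hq1)
  have hz_le : z ≤ ⌈z⌉₊ := Nat.le_ceil z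
  have hle_two_z : (⌈z⌉₊ : ℝ) ≤ 2 * z := by
    linarith [Nat.ceil_lt_add_one (show 0 ≤ z by linarith)]
  refine ⟨⌈z⌉₊, hyz.trans hz_le, ?_, ?_⟩
  · calc y = z ^ q := hzq.symm
      _ ≤ (⌈z⌉₊ : ℝ) ^ q := by gcongr
  · calc (⌈z⌉₊ : ℝ) ^ q ≤ (2 * z) ^ q := by gcongr
      _ = 2 ^ q * y := by rw [Real.mul_rpow (by norm_num) (by linarith), hzq]
      _ ≤ 2 * y := by
          gcongr
          exact Real.rpow_le_self_of_one_le (by norm_num) hq1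

variable {φ : ℝ → ℝ} {p η δ₀ : ℝ}

lemma natCast_mul_sub_deriv_le (hp1 : 1 ≤ p) (hp2 : p ≤ 2) (hφ : Differentiable ℝ φ)
    (hcirc : ∀ t, ∃ k : ℤ, φ (t + 2 * π) - φ t = 2 * π * k) (hδ₀ : 0 < δ₀)
    (htaylor : ∀ s u, |u| < δ₀ → |φ (s + u) - φ s - deriv φ s * u| ≤ η * |u| ^ p)
    {B : NNReal} {n : ℕ} (hB : ApNorm p (fun t => Complex.exp (Complex.I * n * φ t)) ≤ B)
    (hn1 : 1 ≤ 12 * (n * η)) (hnδ₀ : 24 / δ₀ ^ 2 ≤ 12 * (n * η)) (x y : ℝ) :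
    n * (deriv φ y - deriv φ x) - 1 ≤ 24 * (10 * B) ^ p * η * n := by
  obtain ⟨N, hN, hN_lower, hN_upper⟩ :=
    exists_nat_rpow_mem_Icc (q := p / 2) (by linarith) (by linarith) hn1
  have hNδ₀ : 24 ≤ N * δ₀ ^ 2 := (div_le_iff₀ (by positivity)).1 (hnδ₀.trans hN)
  set K := Finset.Icc ⌈n * deriv φ x⌉ ⌊n * deriv φ y⌋
  have hK : ∀ k ∈ K, ∃ s, ∀ u, |u| < δ₀ →
      |n * φ (s + u) - n * φ s - k * u| ≤ n * η * |u| ^ p := by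
    intro k hk
    rw [Finset.mem_Icc, Int.ceil_le, Int.le_floor] at hk
    obtain ⟨s, hs⟩ := exists_mul_deriv_eq hφ hk
    refine ⟨s, fun u hu => ?_⟩
    calc |n * φ (s + u) - n * φ s - k * u| = n * |φ (s + u) - φ s - deriv φ s * u| := by
          rw [← hs, ← Nat.abs_cast n, ← abs_mul, Nat.abs_cast]
          ring_nf
      _ ≤ n * η * |u| ^ p := by
          rw [mul_assoc]
          exact mul_le_mul_of_nonneg_left (htaylor s u hu) n.cast_nonneg
  have hcard := card_le_of_ApNorm_exp_le hp1 hp2 (ψ := fun t => n * φ t)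
    (hφ.continuous.const_mul _) (by exact_mod_cast periodic_exp_I_mul n hcirc)
    (by simpa only [Complex.ofReal_mul, Complex.ofReal_natCast, mul_assoc] using hB)
    hδ₀.le hN_lower hNδ₀ hK
  calc n * (deriv φ y - deriv φ x) - 1 ≤ K.card := by
        rw [mul_sub]
        exact sub_sub_one_le_card_Icc_ceil_floor _ _
    _ ≤ (10 * B) ^ p * (N : ℝ) ^ (p / 2) := hcard
    _ ≤ (10 * B) ^ p * (2 * (12 * (n * η))) := by gcongr
    _ = 24 * (10 * B) ^ p * η * n := by ring

theorem sub_deriv_le_of_frequently_ApNorm_le (hp1 : 1 ≤ p) (hp2 : p ≤ 2) (hφ : Differentiable ℝ φ)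
    (hcirc : ∀ t, ∃ k : ℤ, φ (t + 2 * π) - φ t = 2 * π * k) (hη : 0 < η) (hδ₀ : 0 < δ₀)
    (htaylor : ∀ s u, |u| < δ₀ → |φ (s + u) - φ s - deriv φ s * u| ≤ η * |u| ^ p)
    {B : NNReal}
    (hB : ∃ᶠ n : ℕ in Filter.atTop, ApNorm p (fun t => Complex.exp (Complex.I * n * φ t)) ≤ B)
    (x y : ℝ) : deriv φ y - deriv φ x ≤ 24 * (10 * B) ^ p * η := by
  by_contra! hgap
  have hlarge {c : ℝ} (hc : 0 < c) (A : ℝ) : ∀ᶠ n : ℕ in Filter.atTop, A < n * c :=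
    (tendsto_natCast_atTop_atTop.atTop_mul_const hc).eventually_gt_atTop A
  obtain ⟨n, hn, hn1, hnδ₀, hngap⟩ := (hB.and_eventually ((hlarge hη (1 / 12)).and
    ((hlarge hη (24 / δ₀ ^ 2 / 12)).and (hlarge (sub_pos.2 hgap) 1)))).exists
  have hbound := natCast_mul_sub_deriv_le hp1 hp2 hφ hcirc hδ₀ htaylor hn (by linarith)
    (by linarith) x y
  linarith

end DerivativeGap

section LittleHolder

lemma abs_sub_sub_deriv_mul_le {φ : ℝ → ℝ} (hφ : Differentiable ℝ φ) {s u C : ℝ}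
    (hC : ∀ t ∈ uIcc s (s + u), |deriv φ t - deriv φ s| ≤ C) :
    |φ (s + u) - φ s - deriv φ s * u| ≤ C * |u| := by
  have hderiv (t : ℝ) : HasDerivAt (fun t => φ t - deriv φ s * t) (deriv φ t - deriv φ s) t :=
    (hφ t).hasDerivAt.fun_sub (hasDerivAt_const_mul (deriv φ s))
  have hmean := (convex_uIcc s (s + u)).norm_image_sub_le_of_norm_hasDerivWithin_le
    (fun t _ => (hderiv t).hasDerivWithinAt) hC left_mem_uIcc right_mem_uIcc
  rw [add_sub_cancel_left, Real.norm_eq_abs, Real.norm_eq_abs] at hmean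
  convert hmean using 2
  ring

/-- The uniform little Hölder condition `|g s - g t| = o(|s - t|^r)` as `|s - t| → 0`; for `r = 0`
it is uniform continuity. -/
def IsLittleHolder (r : ℝ) (g : ℝ → ℝ) : Prop :=
  ∀ ε > 0, ∃ δ₀ > 0, ∀ s t, |s - t| < δ₀ → |g s - g t| ≤ ε * |s - t| ^ r

variable {r : ℝ}

lemma isLittleHolder_of_modulus {ω g : ℝ → ℝ}
    (hω : ∀ ε : ℝ, 0 < ε → ∃ δ₀ : ℝ, 0 < δ₀ ∧ ∀ δ : ℝ, 0 < δ → δ < δ₀ → ω δ ≤ ε * δ ^ r)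
    (hg : ∃ C : ℝ, 0 < C ∧ ∀ s t : ℝ, |g s - g t| ≤ C * ω |s - t|) : IsLittleHolder r g := by
  obtain ⟨C, hC, hgω⟩ := hg
  intro ε hε
  obtain ⟨δ₀, hδ₀, hωδ₀⟩ := hω (ε / C) (by positivity)
  refine ⟨δ₀, hδ₀, fun s t hst => ?_⟩
  rcases eq_or_ne s t with rfl | hne
  · rw [sub_self, abs_zero]
    positivity
  calc |g s - g t| ≤ C * ω |s - t| := hgω s t
    _ ≤ C * (ε / C * |s - t| ^ r) :=
        mul_le_mul_of_nonneg_left (hωδ₀ _ (abs_pos.2 (sub_ne_zero.2 hne)) hst) hC.le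
    _ = ε * |s - t| ^ r := by rw [← mul_assoc, mul_div_cancel₀ _ hC.ne']

lemma IsLittleHolder.eq_of_one_le (hr : 1 ≤ r) {g : ℝ → ℝ} (hg : IsLittleHolder r g) (x y : ℝ) :
    g x = g y := by
  have hderiv (t : ℝ) : HasDerivAt g 0 t := by
    rw [hasDerivAt_iff_isLittleO, Asymptotics.isLittleO_iff]
    intro ε hε
    obtain ⟨δ₀, hδ₀, hgδ₀⟩ := hg ε hε
    filter_upwards [Metric.ball_mem_nhds t (lt_min hδ₀ one_pos)] with s hs
    rw [Metric.mem_ball, Real.dist_eq, lt_min_iff] at hs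
    rw [smul_zero, sub_zero, Real.norm_eq_abs, Real.norm_eq_abs]
    refine (hgδ₀ s t hs.1).trans (mul_le_mul_of_nonneg_left ?_ hε.le)
    exact Real.rpow_le_self_of_le_one (abs_nonneg _) hs.2.le hr
  exact is_const_of_deriv_eq_zero (fun t => (hderiv t).differentiableAt)
    (fun t => (hderiv t).deriv) x y

lemma IsLittleHolder.taylor {φ : ℝ → ℝ} (hr : 0 ≤ r) (hφ : Differentiable ℝ φ)
    (hg : IsLittleHolder r (deriv φ)) {ε : ℝ} (hε : 0 < ε) :
    ∃ δ₀ > 0, ∀ s u, |u| < δ₀ → |φ (s + u) - φ s - deriv φ s * u| ≤ ε * |u| ^ (r + 1) := by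
  obtain ⟨δ₀, hδ₀, hgδ₀⟩ := hg ε hε
  refine ⟨δ₀, hδ₀, fun s u hu => ?_⟩
  have hbound : ∀ t ∈ uIcc s (s + u), |deriv φ t - deriv φ s| ≤ ε * |u| ^ r := by
    intro t ht
    have hts : |t - s| ≤ |u| := by simpa using abs_sub_left_of_mem_uIcc ht
    refine (hgδ₀ t s (hts.trans_lt hu)).trans ?_
    gcongr
  rw [Real.rpow_add_of_nonneg (abs_nonneg u) hr zero_le_one, Real.rpow_one, ← mul_assoc]
  exact abs_sub_sub_deriv_mul_le hφ hbound

end LittleHolder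

section Linearity

variable {φ : ℝ → ℝ}

lemma eq_deriv_mul_add_of_deriv_const (hφ : Differentiable ℝ φ)
    (hconst : ∀ x y, deriv φ x = deriv φ y) (t : ℝ) : φ t = deriv φ 0 * t + φ 0 := by
  have htaylor := abs_sub_sub_deriv_mul_le hφ (s := 0) (u := t) (C := 0)
    fun z _ => by rw [hconst z 0, sub_self, abs_zero]
  rw [zero_mul, abs_nonpos_iff, zero_add] at htaylor
  linarith

theorem deriv_eq_of_frequently_ApNorm_le {p : ℝ} (hp : 1 ≤ p) (hφ : Differentiable ℝ φ)
    (hcirc : ∀ t, ∃ k : ℤ, φ (t + 2 * π) - φ t = 2 * π * k)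
    (hφ' : IsLittleHolder (p - 1) (deriv φ))
    (hB : ∃ B : NNReal, ∃ᶠ n : ℕ in Filter.atTop,
      ApNorm p (fun t => Complex.exp (Complex.I * n * φ t)) ≤ B) (x y : ℝ) :
    deriv φ x = deriv φ y := by
  rcases le_total p 2 with hp2 | hp2
  · obtain ⟨B, hB⟩ := hB
    suffices hle : ∀ x y, deriv φ y - deriv φ x ≤ 0 from
      le_antisymm (sub_nonpos.1 (hle y x)) (sub_nonpos.1 (hle x y))
    intro x y
    have hgap (η : ℝ) (hη : 0 < η) : deriv φ y - deriv φ x ≤ 24 * (10 * B) ^ p * η := by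
      obtain ⟨δ₀, hδ₀, htaylor⟩ := hφ'.taylor (by linarith) hφ hη
      rw [sub_add_cancel] at htaylor
      exact sub_deriv_le_of_frequently_ApNorm_le hp hp2 hφ hcirc hη hδ₀ htaylor hB x y
    have hlim : Filter.Tendsto (fun η : ℝ => 24 * (10 * B : ℝ) ^ p * η) (nhdsWithin 0 (Ioi 0))
        (nhds 0) :=
      tendsto_nhdsWithin_of_tendsto_nhds (Continuous.tendsto' (by fun_prop) _ _ (mul_zero _))
    exact ge_of_tendsto hlim (eventually_mem_nhdsWithin.mono hgap)
  · exact hφ'.eq_of_one_le (by linarith) x y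

theorem statement18_general {p : ℝ} (hp : 1 ≤ p) (hφ : Differentiable ℝ φ)
    (hcirc : ∀ t, ∃ k : ℤ, φ (t + 2 * π) - φ t = 2 * π * k)
    (hφ' : IsLittleHolder (p - 1) (deriv φ))
    (hB : ∃ B : NNReal, ∃ᶠ n : ℕ in Filter.atTop,
      ApNorm p (fun t => Complex.exp (Complex.I * n * φ t)) ≤ B) :
    ∃ (m : ℤ) (t₀ : ℝ), ∀ t, φ t = m * t + t₀ := by
  have hlin := eq_deriv_mul_add_of_deriv_const hφ
    (deriv_eq_of_frequently_ApNorm_le hp hφ hcirc hφ' hB)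
  obtain ⟨m, hm⟩ := hcirc 0
  rw [zero_add, hlin (2 * π), add_sub_cancel_right, mul_comm] at hm
  have hslope : deriv φ 0 = m := mul_left_cancel₀ two_pi_pos.ne' hm
  exact ⟨m, φ 0, hslope ▸ hlin⟩

end Linearity

/-- Beurling–Helson type theorem for A_p: if ω(δ) = o(δ^{p−1}) and a
C^{1,ω}-smooth circle map φ satisfies sup_n ‖e^{inφ}‖_{A_p} < ∞, then φ is linear:
φ(t) = m·t + t₀ with m ∈ ℤ. -/
theorem statement18
    (p : ℝ) (hp1 : 1 < p) (hp2 : p < 2)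
    (ω : ℝ → ℝ)
    (hω_cont : ContinuousOn ω (Ici 0)) (hω_mono : MonotoneOn ω (Ici 0))
    (hω_zero : ω 0 = 0) (hω_pos : ∀ δ : ℝ, 0 < δ → 0 < ω δ)
    -- ω(δ) = o(δ^{p−1}) as δ → +0
    (hω_little_o : ∀ ε : ℝ, 0 < ε → ∃ δ₀ : ℝ, 0 < δ₀ ∧
      ∀ δ : ℝ, 0 < δ → δ < δ₀ → ω δ ≤ ε * δ ^ (p - 1))
    (φ : ℝ → ℝ)
    -- φ is a map of the circle into itself
    (hφ_circ : ∀ t : ℝ, ∃ k : ℤ, φ (t + 2 * Real.pi) - φ t = 2 * Real.pi * k)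
    (hφ_C1 : ContDiff ℝ 1 φ)
    (hφ_lip : ∃ C : ℝ, 0 < C ∧ ∀ s t : ℝ, |deriv φ s - deriv φ t| ≤ C * ω |s - t|)
    -- φ acts from A to A_p: sup_n ‖e^{inφ}‖_{A_p} < ∞
    (hφ_bdd : ∃ B : ℝ, ∀ n : ℤ,
      ApNorm p (fun t => Complex.exp (Complex.I * (n : ℂ) * (φ t : ℂ))) ≤
        ENNReal.ofReal B) :
    ∃ (m : ℤ) (t₀ : ℝ), ∀ t : ℝ, φ t = (m : ℝ) * t + t₀ := by
  obtain ⟨B, hB⟩ := hφ_bdd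
  exact statement18_general hp1.le (hφ_C1.differentiable one_ne_zero) hφ_circ
    (isLittleHolder_of_modulus hω_little_o hφ_lip)
    ⟨B.toNNReal, .of_forall fun n => by simpa only [ENNReal.ofReal, Int.cast_natCast] using hB n⟩
end

section
/- Let 1 < p < 2 and ε > 0 with p − 1 − ε > 0. There exists a nowhere linear C^{1,p−1−ε}-diffeomorphism h of the circle 𝕋 (i.e., h′ satisfies a Lipschitz condition of order p−1−ε) such that sup_{n∈ℤ} ‖e^{inh}‖_{A_p(𝕋)} < ∞; consequently, the superposition operator f ↦ f∘h is bounded from A(𝕋) to A_p(𝕋). -/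
open MeasureTheory Real Set
open scoped ENNReal

/-!
Let `Φ` be the Cantor function of ratio `r`, where `r ^ α = 1 / 2`; it is Hölder of exponent `α`.
Up to the affine phases at its ends, the oscillatory integral of `exp (i (x ∫ Φ - ω u))` over
`[0, 1]` splits into two copies of itself with `x` replaced by `x r / 2` and a linear middle piece.
Van der Corput's estimate makes one of the two copies negligible at each frequency `ω`. Iterating
until `x` is small bounds the `ℓ^p` norm over equally spaced frequencies independently of `x`,
because `2 r ^ (p - 1) < 1`, which is `α < p - 1`.

Perturb the derivative `1 + D` of a circle map `h` by a bump made of copies of `Φ` on a window of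
length `τ` on which `D` is constant. Then `‖e^{inh}‖_{A_p}` grows by at most `K τ ^ (1 - 1 / p)`,
with `K` independent of `n`. Windows exist everywhere, since Cantor functions are locally constant
on a dense set, so countably many bumps of summable cost destroy linearity on every interval.
Expanding `f` in its Fourier series gives the bound on the superposition operator.
-/

open Filter Topology

section OscillatoryIntegrals

variable {F : Type*} [NormedAddCommGroup F]

/-- Subdividing `[a, b]` into `N` equal parts removes the second-order term
`A * (d - c)` as `N → ∞`. -/
theorem norm_sub_le_of_forall_norm_sub_le {E : ℝ → F} {g : ℝ → ℝ} {A M a b : ℝ} (hab : a ≤ b)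
    (h : ∀ c d, a ≤ c → c ≤ d → d ≤ b → ‖E d - E c‖ ≤ (g c - g d) * (A * (d - c) + M)) :
    ‖E b - E a‖ ≤ (g a - g b) * M := by
  have subdivide (N : ℕ) (hN : (0 : ℝ) < N) :
      ‖E b - E a‖ ≤ (g a - g b) * (A * ((b - a) / N) + M) := by
    set t : ℕ → ℝ := fun i => a + i * ((b - a) / N) with ht
    have hstep : 0 ≤ (b - a) / N := div_nonneg (sub_nonneg.2 hab) hN.le
    have ht0 : t 0 = a := by simp [ht]
    have htN : t N = b := by simp only [ht]; field_simp; ring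
    have hdiff (i : ℕ) : t (i + 1) - t i = (b - a) / N := by simp only [ht]; push_cast; ring
    have htmono : Monotone t := monotone_nat_of_le_succ fun i => by linarith [hdiff i]
    calc ‖E b - E a‖ = ‖∑ i ∈ Finset.range N, (E (t (i + 1)) - E (t i))‖ := by
          rw [Finset.sum_range_sub (fun i => E (t i)), ht0, htN]
      _ ≤ ∑ i ∈ Finset.range N, (g (t i) - g (t (i + 1))) * (A * ((b - a) / N) + M) := by
          refine norm_sum_le_of_le _ fun i hi => ?_
          have hi' : i + 1 ≤ N := Finset.mem_range.1 hi
          rw [← hdiff i]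
          exact h _ _ (ht0 ▸ htmono i.zero_le) (htmono i.le_succ) (htN ▸ htmono hi')
      _ = _ := by
          rw [← Finset.sum_mul, Finset.sum_range_sub' (fun i => g (t i)), ht0, htN]
  have lim : Tendsto (fun N : ℕ => (g a - g b) * (A * ((b - a) / N) + M)) atTop
      (𝓝 ((g a - g b) * (A * 0 + M))) :=
    ((tendsto_const_div_atTop_nhds_zero_nat _).const_mul _ |>.add_const _).const_mul _
  rw [mul_zero, zero_add] at lim
  refine ge_of_tendsto lim ?_
  filter_upwards [eventually_gt_atTop 0] with N hN using subdivide N (mod_cast hN)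

variable [NormedSpace ℝ F] [CompleteSpace F]

theorem norm_integral_smul_sub_boundary_le {g : ℝ → ℝ} {w W : ℝ → F} {A M c d : ℝ} (hcd : c ≤ d)
    (hg : AntitoneOn g (Icc c d)) (hW : ∀ u ∈ Icc c d, HasDerivAt W (w u) u)
    (hw : ContinuousOn w (Icc c d)) (hA : ∀ u ∈ Icc c d, ‖w u‖ ≤ A) (hM : ‖W d‖ ≤ M) :
    ‖(∫ u in c..d, g u • w u) - (g d • W d - g c • W c)‖ ≤ (g c - g d) * (A * (d - c) + M) := by
  rw [← uIcc_of_le hcd] at hg hw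
  have hwi : IntervalIntegrable w volume c d := hw.intervalIntegrable
  have hci : IntervalIntegrable (fun u => g c • w u) volume c d := hwi.smul (g c)
  have hgi : IntervalIntegrable (fun u => g u • w u) volume c d :=
    hg.intervalIntegrable.smul_continuousOn hw
  rw [uIcc_of_le hcd] at hg
  have hW_sub : ∫ u in c..d, w u = W d - W c :=
    intervalIntegral.integral_eq_sub_of_hasDerivAt (by rwa [uIcc_of_le hcd]) hwi
  have hsplit : (∫ u in c..d, g u • w u) - (g d • W d - g c • W c)
      = (∫ u in c..d, (g u - g c) • w u) + (g c - g d) • W d := by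
    simp only [sub_smul]
    rw [intervalIntegral.integral_sub hgi hci, intervalIntegral.integral_smul, hW_sub, smul_sub]
    abel
  have hgcd : 0 ≤ g c - g d := sub_nonneg.2 (hg (left_mem_Icc.2 hcd) (right_mem_Icc.2 hcd) hcd)
  have hint : ‖∫ u in c..d, (g u - g c) • w u‖ ≤ (g c - g d) * A * |d - c| := by
    refine intervalIntegral.norm_integral_le_of_norm_le_const fun u hu => ?_
    have hu' : u ∈ Icc c d := Ioc_subset_Icc_self (uIoc_of_le hcd ▸ hu)
    have hcu : g u ≤ g c := hg (left_mem_Icc.2 hcd) hu' hu'.1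
    have hud : g d ≤ g u := hg hu' (right_mem_Icc.2 hcd) hu'.2
    rw [norm_smul, Real.norm_eq_abs, abs_of_nonpos (by linarith)]
    exact mul_le_mul (by linarith) (hA u hu') (norm_nonneg _) hgcd
  rw [hsplit]
  calc _ ≤ (g c - g d) * A * |d - c| + (g c - g d) * M := norm_add_le_of_le hint <| by
        rw [norm_smul, Real.norm_of_nonneg hgcd]
        exact mul_le_mul_of_nonneg_left hM hgcd
    _ = _ := by rw [abs_of_nonneg (sub_nonneg.2 hcd)]; ring

theorem norm_integral_smul_le_of_antitoneOn {g : ℝ → ℝ} {w W : ℝ → F} {M a b : ℝ} (hab : a ≤ b)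
    (hg : AntitoneOn g (Icc a b)) (hW : ∀ u ∈ Icc a b, HasDerivAt W (w u) u)
    (hw : ContinuousOn w (Icc a b)) (hM : ∀ u ∈ Icc a b, ‖W u‖ ≤ M) :
    ‖∫ u in a..b, g u • w u‖ ≤ M * (|g a| + |g b| + (g a - g b)) := by
  obtain ⟨A, hA⟩ := isCompact_Icc.exists_bound_of_continuousOn hw
  have hgi {c d : ℝ} (hc : a ≤ c) (hcd : c ≤ d) (hd : d ≤ b) :
      IntervalIntegrable (fun u => g u • w u) volume c d :=
    have hsub : uIcc c d ⊆ Icc a b := uIcc_of_le hcd ▸ Icc_subset_Icc hc hd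
    (hg.mono hsub).intervalIntegrable.smul_continuousOn (hw.mono hsub)
  set E : ℝ → F := fun c => (∫ u in a..c, g u • w u) - g c • W c with hE
  have increment (c d : ℝ) (hc : a ≤ c) (hcd : c ≤ d) (hd : d ≤ b) :
      ‖E d - E c‖ ≤ (g c - g d) * (A * (d - c) + M) := by
    have hsub : Icc c d ⊆ Icc a b := Icc_subset_Icc hc hd
    have hE_sub : E d - E c = (∫ u in c..d, g u • w u) - (g d • W d - g c • W c) := by
      simp only [hE]
      rw [← intervalIntegral.integral_add_adjacent_intervals
        (hgi le_rfl hc (hcd.trans hd)) (hgi hc hcd hd)]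
      abel
    rw [hE_sub]
    exact norm_integral_smul_sub_boundary_le hcd (hg.mono hsub) (fun u hu => hW u (hsub hu))
      (hw.mono hsub) (fun u hu => hA u (hsub hu)) (hM d (hsub (right_mem_Icc.2 hcd)))
  have hboundary {u : ℝ} (hu : u ∈ Icc a b) : ‖g u • W u‖ ≤ |g u| * M := by
    rw [norm_smul]; exact mul_le_mul_of_nonneg_left (hM u hu) (abs_nonneg _)
  calc ‖∫ u in a..b, g u • w u‖ = ‖(E b - E a) + g b • W b - g a • W a‖ := by
        congr 1; simp only [hE, intervalIntegral.integral_same]; abel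
    _ ≤ (g a - g b) * M + |g b| * M + |g a| * M :=
        norm_sub_le_of_le (norm_add_le_of_le (norm_sub_le_of_forall_norm_sub_le hab increment)
          (hboundary (right_mem_Icc.2 hab))) (hboundary (left_mem_Icc.2 hab))
    _ = _ := by ring

/-- The first-derivative test of van der Corput. -/
theorem norm_integral_exp_le_of_monotoneOn_deriv {θ φ : ℝ → ℝ} {δ a b : ℝ} (hab : a ≤ b)
    (hδ : 0 < δ) (hθ : ∀ u ∈ Icc a b, HasDerivAt θ (φ u) u) (hφ : ContinuousOn φ (Icc a b))
    (hmono : MonotoneOn φ (Icc a b))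
    (hlower : (∀ u ∈ Icc a b, δ ≤ φ u) ∨ ∀ u ∈ Icc a b, φ u ≤ -δ) :
    ‖∫ u in a..b, Complex.exp (θ u * Complex.I)‖ ≤ 2 / δ := by
  have hne : ∀ u ∈ Icc a b, φ u ≠ 0 := fun u hu =>
    hlower.elim (fun h => (hδ.trans_le (h u hu)).ne')
      fun h => ((h u hu).trans_lt (neg_neg_of_pos hδ)).ne
  have hinv : AntitoneOn (fun u => (φ u)⁻¹) (Icc a b) := fun u hu v hv huv =>
    hlower.elim (fun h => inv_anti₀ (hδ.trans_le (h u hu)) (hmono hu hv huv))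
      fun h => (inv_le_inv_of_neg ((h v hv).trans_lt (neg_neg_of_pos hδ))
        ((h u hu).trans_lt (neg_neg_of_pos hδ))).2 (hmono hu hv huv)
  have hθc : ContinuousOn θ (Icc a b) := fun u hu => (hθ u hu).continuousAt.continuousWithinAt
  have hderiv : ∀ u ∈ Icc a b, HasDerivAt (fun u => Complex.exp (θ u * Complex.I) / Complex.I)
      ((φ u : ℂ) * Complex.exp (θ u * Complex.I)) u := fun u hu => by
    refine (((hθ u hu).ofReal_comp.mul_const Complex.I).cexp.div_const Complex.I).congr_deriv ?_
    field_simp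
  have habel := norm_integral_smul_le_of_antitoneOn (M := 1) hab hinv hderiv
    (by fun_prop) (fun u _ => by simp [Complex.norm_exp_ofReal_mul_I])
  have hendpoints : |(φ a)⁻¹| + |(φ b)⁻¹| + ((φ a)⁻¹ - (φ b)⁻¹) ≤ 2 * δ⁻¹ := by
    rcases hlower with h | h
    · have ha := inv_anti₀ hδ (h a (left_mem_Icc.2 hab))
      rw [abs_of_pos (inv_pos.2 (hδ.trans_le (h a (left_mem_Icc.2 hab)))),
        abs_of_pos (inv_pos.2 (hδ.trans_le (h b (right_mem_Icc.2 hab))))]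
      linarith
    · have hneg : ∀ u ∈ Icc a b, (φ u)⁻¹ < 0 := fun u hu =>
        inv_lt_zero.2 ((h u hu).trans_lt (neg_neg_of_pos hδ))
      have hb := inv_anti₀ hδ (le_neg_of_le_neg (h b (right_mem_Icc.2 hab)))
      rw [inv_neg] at hb
      rw [abs_of_neg (hneg a (left_mem_Icc.2 hab)), abs_of_neg (hneg b (right_mem_Icc.2 hab))]
      linarith
  calc ‖∫ u in a..b, Complex.exp (θ u * Complex.I)‖
      = ‖∫ u in a..b, (φ u)⁻¹ • ((φ u : ℂ) * Complex.exp (θ u * Complex.I))‖ := by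
        congr 1
        refine intervalIntegral.integral_congr fun u hu => ?_
        have : (φ u : ℂ) ≠ 0 := mod_cast hne u (uIcc_of_le hab ▸ hu)
        simp only [Complex.real_smul, Complex.ofReal_inv]
        field_simp
    _ ≤ 1 * (|(φ a)⁻¹| + |(φ b)⁻¹| + ((φ a)⁻¹ - (φ b)⁻¹)) := habel
    _ ≤ 2 / δ := by rw [one_mul, div_eq_mul_inv]; exact hendpoints

end OscillatoryIntegrals

section SampledNorms

theorem eLpNorm_count_ofReal {ι E : Type*} [MeasurableSpace ι] [MeasurableSingletonClass ι]
    [NormedAddCommGroup E] {p : ℝ} (hp : 0 < p) (f : ι → E) :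
    eLpNorm f (ENNReal.ofReal p) .count = (∑' i, ‖f i‖ₑ ^ p) ^ (1 / p) := by
  rw [eLpNorm_eq_lintegral_rpow_enorm_toReal (ENNReal.ofReal_pos.2 hp).ne' ENNReal.ofReal_ne_top,
    lintegral_count, ENNReal.toReal_ofReal hp.le]

theorem eLpNorm_count_le_of_forall_le_or {ι E : Type*} [MeasurableSpace ι]
    [MeasurableSingletonClass ι] [NormedAddCommGroup E] {p : ℝ} (hp : 0 < p) {f g h : ι → E}
    {B : ℝ≥0∞} (hg : eLpNorm g (ENNReal.ofReal p) .count ≤ B)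
    (hh : eLpNorm h (ENNReal.ofReal p) .count ≤ B) (hf : ∀ i, ‖f i‖ ≤ ‖g i‖ ∨ ‖f i‖ ≤ ‖h i‖) :
    eLpNorm f (ENNReal.ofReal p) .count ≤ 2 ^ (1 / p) * B := by
  rw [eLpNorm_count_ofReal hp, one_div, ENNReal.rpow_inv_le_iff hp] at hg hh ⊢
  rw [ENNReal.mul_rpow_of_nonneg _ _ hp.le, ENNReal.rpow_inv_rpow hp.ne', two_mul]
  refine le_trans ?_ (add_le_add hg hh)
  rw [← ENNReal.tsum_add]
  refine ENNReal.tsum_le_tsum fun i => ?_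
  rcases hf i with hi | hi <;> have := ENNReal.rpow_le_rpow (enorm_le_iff_norm_le.2 hi) hp.le
  · exact le_add_right this
  · exact le_add_left this

theorem eLpNorm_count_le_of_forall_le_add_or {ι E : Type*} [MeasurableSpace ι]
    [MeasurableSingletonClass ι] [Countable ι] [NormedAddCommGroup E] {p r : ℝ} (hp : 1 ≤ p)
    (hr : 0 ≤ r) {f g h : ι → E} {e : ι → ℝ} {B C : ℝ≥0∞}
    (hg : eLpNorm g (ENNReal.ofReal p) .count ≤ B)
    (hh : eLpNorm h (ENNReal.ofReal p) .count ≤ B) (he : eLpNorm e (ENNReal.ofReal p) .count ≤ C)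
    (hf : ∀ i, ‖f i‖ ≤ r * ‖g i‖ + e i ∨ ‖f i‖ ≤ r * ‖h i‖ + e i) :
    eLpNorm f (ENNReal.ofReal p) .count ≤ 2 ^ (1 / p) * (ENNReal.ofReal r * B + C) := by
  have hsum {g : ι → E} (hg : eLpNorm g (ENNReal.ofReal p) .count ≤ B) :
      eLpNorm (fun i => r * ‖g i‖ + e i) (ENNReal.ofReal p) .count ≤ ENNReal.ofReal r * B + C := by
    refine (eLpNorm_add_le .of_discrete .of_discrete (by simpa using hp)).trans (add_le_add ?_ he)
    rw [← Real.enorm_of_nonneg hr]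
    refine (eLpNorm_const_smul r (fun i => ‖g i‖) _ _).trans_le ?_
    rw [eLpNorm_norm]
    gcongr
  rw [← eLpNorm_norm]
  exact eLpNorm_count_le_of_forall_le_or (by linarith) (hsum hg) (hsum hh) fun i =>
    (hf i).imp (fun hi => by simpa using hi.trans (le_abs_self _))
      fun hi => by simpa using hi.trans (le_abs_self _)

theorem ofReal_one_add_abs_rpow_neg_le_setLIntegral {p τ : ℝ} (hp : 0 ≤ p) (hτ : 0 < τ)
    (hτ1 : τ ≤ 1) (a : ℝ) :
    ENNReal.ofReal ((1 + |a|) ^ (-p))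
      ≤ ENNReal.ofReal (2 ^ p / τ) * ∫⁻ y in Ioc a (a + τ), ENNReal.ofReal ((1 + ‖y‖) ^ (-p)) := by
  have hcell : ∀ y ∈ Ioc a (a + τ),
      ENNReal.ofReal ((2 * (1 + |a|)) ^ (-p)) ≤ ENNReal.ofReal ((1 + ‖y‖) ^ (-p)) := by
    rintro y ⟨hy, hy'⟩
    refine ENNReal.ofReal_le_ofReal
      (Real.rpow_le_rpow_of_nonpos (by positivity) ?_ (neg_nonpos.2 hp))
    have : |y| ≤ |a| + |y - a| := by simpa using abs_add_le a (y - a)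
    rw [abs_of_pos (sub_pos.2 hy)] at this
    rw [Real.norm_eq_abs]
    linarith [abs_nonneg a]
  calc ENNReal.ofReal ((1 + |a|) ^ (-p))
      = ENNReal.ofReal (2 ^ p / τ)
        * (ENNReal.ofReal ((2 * (1 + |a|)) ^ (-p)) * volume (Ioc a (a + τ))) := by
        rw [Real.volume_Ioc, add_sub_cancel_left, ← ENNReal.ofReal_mul (by positivity),
          ← ENNReal.ofReal_mul (by positivity), Real.mul_rpow zero_le_two (by positivity),
          Real.rpow_neg zero_le_two]
        congr 1
        field_simp
    _ ≤ _ := by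
        rw [← setLIntegral_const]
        exact mul_le_mul' le_rfl (setLIntegral_mono' measurableSet_Ioc hcell)

theorem exists_eLpNorm_inv_one_add_abs_le {p : ℝ} (hp : 1 < p) :
    ∃ K : ℝ, 0 ≤ K ∧ ∀ τ c : ℝ, 0 < τ → τ ≤ 1 →
      eLpNorm (fun k : ℤ => (1 + |k * τ + c|)⁻¹) (ENNReal.ofReal p) .count
        ≤ ENNReal.ofReal (K * τ ^ (-(1 / p))) := by
  have hp0 : 0 < p := by linarith
  set w : ℝ → ℝ≥0∞ := fun y => ENNReal.ofReal ((1 + ‖y‖) ^ (-p))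
  have hwI : ∫⁻ y, w y ≠ ∞ := (finite_integral_one_add_norm (by simpa using hp)).ne
  refine ⟨2 * (∫⁻ y, w y).toReal ^ (1 / p), by positivity, fun τ c hτ hτ1 => ?_⟩
  have hterm (k : ℤ) : ‖(1 + |k * τ + c|)⁻¹‖ₑ ^ p
      ≤ ENNReal.ofReal (2 ^ p / τ) * ∫⁻ y in Ioc (c + k • τ) (c + (k + 1) • τ), w y := by
    rw [Real.enorm_of_nonneg (by positivity), ENNReal.ofReal_rpow_of_nonneg (by positivity) hp0.le,
      Real.inv_rpow (by positivity), ← Real.rpow_neg (by positivity), add_smul, one_smul,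
      ← add_assoc, zsmul_eq_mul, add_comm c]
    exact ofReal_one_add_abs_rpow_neg_le_setLIntegral hp0.le hτ hτ1 _
  rw [eLpNorm_count_ofReal hp0, one_div, ENNReal.rpow_inv_le_iff hp0]
  calc ∑' k : ℤ, ‖(1 + |k * τ + c|)⁻¹‖ₑ ^ p
      ≤ ∑' k : ℤ, ENNReal.ofReal (2 ^ p / τ) * ∫⁻ y in Ioc (c + k • τ) (c + (k + 1) • τ), w y :=
        ENNReal.tsum_le_tsum hterm
    _ ≤ ENNReal.ofReal (2 ^ p / τ) * ∫⁻ y, w y := by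
        rw [ENNReal.tsum_mul_left, ← lintegral_iUnion (fun _ => measurableSet_Ioc)
          (pairwise_disjoint_Ioc_add_zsmul c τ)]
        exact mul_le_mul' le_rfl (setLIntegral_le_lintegral _ _)
    _ = ENNReal.ofReal (2 ^ p / τ * (∫⁻ y, w y).toReal) := by
        rw [ENNReal.ofReal_mul (by positivity), ENNReal.ofReal_toReal hwI]
    _ = _ := by
        rw [ENNReal.ofReal_rpow_of_nonneg (by positivity) hp0.le, Real.mul_rpow (by positivity)
          (by positivity), Real.mul_rpow zero_le_two (by positivity),
          ← Real.rpow_mul (by positivity), ← Real.rpow_mul hτ.le, inv_mul_cancel₀ hp0.ne',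
          neg_mul, inv_mul_cancel₀ hp0.ne', Real.rpow_one, Real.rpow_neg_one]
        congr 1
        field_simp

end SampledNorms

section DenselyConst

variable {X Y β γ : Type*} [TopologicalSpace X] [TopologicalSpace Y]

/-- A function is *densely constant* if it is locally constant on a dense set of points; the
prototypes are Cantor functions. -/
def DenselyConst (f : X → β) : Prop :=
  Dense {x | EventuallyConst f (𝓝 x)}

theorem isOpen_setOf_eventuallyConst_nhds (f : X → β) : IsOpen {x | EventuallyConst f (𝓝 x)} := by
  refine isOpen_iff_mem_nhds.2 fun x hx => ?_
  obtain ⟨s, hs, hsub⟩ := hx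
  filter_upwards [eventually_eventually_nhds.2 hs] with y hy using ⟨s, hy, hsub⟩

namespace DenselyConst

theorem add [Add β] {f g : X → β} (hf : DenselyConst f) (hg : DenselyConst g) :
    DenselyConst (f + g) :=
  (Dense.inter_of_isOpen_left hf hg (isOpen_setOf_eventuallyConst_nhds f)).mono
    fun _ hx => hx.1.add hx.2

theorem comp {f : X → β} (hf : DenselyConst f) (φ : β → γ) : DenselyConst (φ ∘ f) :=
  Dense.mono (fun _ hx => EventuallyConst.comp hx φ) hf

theorem comp_isOpenMap {f : X → β} (hf : DenselyConst f) {e : Y → X} (he : Continuous e)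
    (he' : IsOpenMap e) : DenselyConst (f ∘ e) :=
  (Dense.preimage hf he').mono fun _ hy => EventuallyConst.comp_tendsto hy he.continuousAt

end DenselyConst

end DenselyConst

section CantorFunction

variable {r : ℝ} {f g Φ : ℝ → ℝ}

/-- A *ramp* climbs monotonically from `0` on `(-∞, 0]` to `1` on `[1, ∞)`. -/
structure IsRamp (f : ℝ → ℝ) : Prop where
  mono : Monotone f
  zero : ∀ u ≤ 0, f u = 0
  one : ∀ u, 1 ≤ u → f u = 1

namespace IsRamp

theorem nonneg (hf : IsRamp f) (u : ℝ) : 0 ≤ f u :=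
  hf.zero _ (min_le_left 0 u) ▸ hf.mono (min_le_right 0 u)

theorem le_one (hf : IsRamp f) (u : ℝ) : f u ≤ 1 :=
  hf.one _ (le_max_left 1 u) ▸ hf.mono (le_max_right 1 u)

theorem abs_sub_le_one (hf : IsRamp f) (hg : IsRamp g) (u v : ℝ) : |f u - g v| ≤ 1 :=
  abs_sub_le_of_nonneg_of_le (hf.nonneg u) (hf.le_one u) (hg.nonneg v) (hg.le_one v)

end IsRamp

/-- One step of the construction of the Cantor function of ratio `r`: each of the intervals
`[0, r]` and `[1 - r, 1]` carries a copy of `f` of half the height. -/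
noncomputable def selfSimilarStep (r : ℝ) (f : ℝ → ℝ) (u : ℝ) : ℝ :=
  (f (u / r) + f ((u - 1 + r) / r)) / 2

theorem IsRamp.selfSimilarStep_of_le (hf : IsRamp f) (hr : 0 < r) {u : ℝ} (hu : u ≤ 1 - r) :
    selfSimilarStep r f u = f (u / r) / 2 := by
  rw [selfSimilarStep,
    hf.zero ((u - 1 + r) / r) (div_nonpos_of_nonpos_of_nonneg (by linarith) hr.le), add_zero]

theorem IsRamp.selfSimilarStep_of_ge (hf : IsRamp f) (hr : 0 < r) {u : ℝ} (hu : r ≤ u) :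
    selfSimilarStep r f u = (1 + f ((u - 1 + r) / r)) / 2 := by
  rw [selfSimilarStep, hf.one (u / r) (by rwa [le_div_iff₀ hr, one_mul])]

theorem IsRamp.isRamp_selfSimilarStep (hf : IsRamp f) (hr : 0 < r) (hr' : r < 1 / 2) :
    IsRamp (selfSimilarStep r f) where
  mono u v huv := by
    have := hf.mono (by gcongr : u / r ≤ v / r)
    have := hf.mono (by gcongr : (u - 1 + r) / r ≤ (v - 1 + r) / r)
    unfold selfSimilarStep
    linarith
  zero u hu := by
    rw [hf.selfSimilarStep_of_le hr (by linarith),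
      hf.zero _ (div_nonpos_of_nonpos_of_nonneg hu hr.le), zero_div]
  one u hu := by
    rw [hf.selfSimilarStep_of_ge hr (by linarith), hf.one _ (by rw [le_div_iff₀ hr]; linarith)]
    norm_num

theorem abs_selfSimilarStep_sub_le (hf : IsRamp f) (hg : IsRamp g) (hr : 0 < r) (hr' : r < 1 / 2)
    {δ : ℝ} (h : ∀ u, |f u - g u| ≤ δ) (u : ℝ) :
    |selfSimilarStep r f u - selfSimilarStep r g u| ≤ δ / 2 := by
  rcases le_total u (1 - r) with hu | hu
  · rw [hf.selfSimilarStep_of_le hr hu, hg.selfSimilarStep_of_le hr hu, ← sub_div, abs_div,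
      abs_of_pos (zero_lt_two' ℝ)]
    linarith [h (u / r)]
  · rw [hf.selfSimilarStep_of_ge hr (by linarith), hg.selfSimilarStep_of_ge hr (by linarith),
      ← sub_div, add_sub_add_left_eq_sub, abs_div, abs_of_pos (zero_lt_two' ℝ)]
    linarith [h ((u - 1 + r) / r)]

/-- `Φ` is the Cantor function of ratio `r`, i.e. the distribution function of the natural
measure on the Cantor set obtained by keeping the two outer `r`-portions at each stage. -/
structure IsCantor (r : ℝ) (Φ : ℝ → ℝ) : Prop extends IsRamp Φ where
  ratio_pos : 0 < r
  ratio_lt : r < 1 / 2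
  selfSimilarStep_eq : selfSimilarStep r Φ = Φ

theorem exists_isCantor (hr : 0 < r) (hr' : r < 1 / 2) : ∃ Φ, IsCantor r Φ := by
  set iter : ℕ → ℝ → ℝ := fun m => (selfSimilarStep r)^[m] (fun u => max 0 (min 1 u)) with hiter
  have hsucc (m : ℕ) : iter (m + 1) = selfSimilarStep r (iter m) := Function.iterate_succ_apply' ..
  have hramp (m : ℕ) : IsRamp (iter m) := by
    induction m with
    | zero => exact ⟨fun u v h => by simp only [hiter, Function.iterate_zero, id]; gcongr,
        fun u hu => by simp [hiter, hu], fun u hu => by simp [hiter, hu]⟩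
    | succ m ih => exact hsucc m ▸ ih.isRamp_selfSimilarStep hr hr'
  have hcontract (m : ℕ) : ∀ u, |iter m u - iter (m + 1) u| ≤ (1 / 2) ^ m := by
    induction m with
    | zero => simpa using fun u => (hramp 0).abs_sub_le_one (hramp 1) u u
    | succ m ih =>
      intro u
      rw [hsucc m, hsucc (m + 1), pow_succ, mul_one_div]
      exact abs_selfSimilarStep_sub_le (hramp m) (hramp (m + 1)) hr hr' ih u
  have hcauchy (u : ℝ) : ∃ l, Tendsto (fun m => iter m u) atTop (𝓝 l) :=
    cauchySeq_tendsto_of_complete <| cauchySeq_of_le_geometric (1 / 2) 1 (by norm_num) fun m => by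
      rw [Real.dist_eq, one_mul]; exact hcontract m u
  choose Φ hΦ using hcauchy
  refine ⟨Φ, ⟨fun u v huv => le_of_tendsto_of_tendsto' (hΦ u) (hΦ v) fun m => (hramp m).mono huv,
    fun u hu => ?_, fun u hu => ?_⟩, hr, hr', funext fun u => ?_⟩
  · exact tendsto_nhds_unique (hΦ u) (by simp only [(hramp _).zero u hu, tendsto_const_nhds])
  · exact tendsto_nhds_unique (hΦ u) (by simp only [(hramp _).one u hu, tendsto_const_nhds])
  · refine tendsto_nhds_unique ?_ ((tendsto_add_atTop_iff_nat 1).2 (hΦ u))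
    simp only [hsucc]
    exact ((hΦ _).add (hΦ _)).div_const 2

namespace IsCantor

theorem apply_of_le (h : IsCantor r Φ) {u : ℝ} (hu : u ≤ 1 - r) : Φ u = Φ (u / r) / 2 := by
  rw [← h.selfSimilarStep_of_le h.ratio_pos hu, h.selfSimilarStep_eq]

theorem apply_of_ge (h : IsCantor r Φ) {u : ℝ} (hu : r ≤ u) :
    Φ u = (1 + Φ ((u - 1 + r) / r)) / 2 := by
  rw [← h.selfSimilarStep_of_ge h.ratio_pos hu, h.selfSimilarStep_eq]

theorem apply_of_mem_Icc (h : IsCantor r Φ) {u : ℝ} (hu : u ∈ Icc r (1 - r)) : Φ u = 1 / 2 := by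
  rw [h.apply_of_le hu.2, h.one _ (by rw [le_div_iff₀ h.ratio_pos]; linarith [hu.1])]

theorem sub_le_of_sub_le (h : IsCantor r Φ) (m : ℕ) {s t : ℝ} (hst : s ≤ t)
    (hm : t - s ≤ (1 - 2 * r) * r ^ m) : Φ t - Φ s ≤ (1 / 2) ^ m := by
  have hr := h.ratio_pos
  induction m generalizing s t with
  | zero => linarith [h.nonneg s, h.le_one t]
  | succ m ih =>
    have hr' : r ^ (m + 1) ≤ 1 := pow_le_one₀ hr.le (by linarith [h.ratio_lt])
    have hgap : t - s ≤ 1 - 2 * r :=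
      hm.trans (mul_le_of_le_one_right (by linarith [h.ratio_lt]) hr')
    have hscaled : (t - s) / r ≤ (1 - 2 * r) * r ^ m := by
      rw [div_le_iff₀ hr, mul_assoc, ← pow_succ]; exact hm
    rw [pow_succ]
    rcases le_total t (1 - r) with ht | ht
    · rw [h.apply_of_le ht, h.apply_of_le (hst.trans ht)]
      linarith [ih (s := s / r) (t := t / r) (by gcongr) (by rwa [← sub_div])]
    · rw [h.apply_of_ge (by linarith : r ≤ t), h.apply_of_ge (by linarith : r ≤ s)]
      linarith [ih (s := (s - 1 + r) / r) (t := (t - 1 + r) / r) (by gcongr)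
        (by rw [← sub_div]; ring_nf at hscaled ⊢; exact hscaled)]

theorem exists_holder (h : IsCantor r Φ) {α : ℝ} (hα : 0 < α) (hrα : r ^ α = 1 / 2) :
    ∃ C, 0 ≤ C ∧ ∀ s t, |Φ s - Φ t| ≤ C * |s - t| ^ α := by
  have hr := h.ratio_pos
  have hr' : 0 < 1 - 2 * r := by linarith [h.ratio_lt]
  refine ⟨2 / (1 - 2 * r) ^ α, by positivity, fun s t => ?_⟩
  wlog hst : s < t generalizing s t with H
  · rcases (not_lt.1 hst).lt_or_eq with hts | rfl
    · rw [abs_sub_comm, abs_sub_comm s]; exact H t s hts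
    · simp only [sub_self, abs_zero]; positivity
  rw [abs_sub_comm, abs_sub_comm s, abs_of_nonneg (sub_nonneg.2 (h.mono hst.le)),
    abs_of_pos (sub_pos.2 hst), div_mul_eq_mul_div, mul_div_assoc,
    ← Real.div_rpow (sub_pos.2 hst).le hr'.le]
  have hd : 0 < (t - s) / (1 - 2 * r) := div_pos (sub_pos.2 hst) hr'
  rcases le_total 1 ((t - s) / (1 - 2 * r)) with hlarge | hsmall
  · linarith [Real.one_le_rpow hlarge hα.le, h.nonneg s, h.le_one t]
  · obtain ⟨m, hm, hm'⟩ := exists_nat_pow_near_of_lt_one hd hsmall hr (by linarith)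
    calc Φ t - Φ s ≤ (1 / 2) ^ m :=
          h.sub_le_of_sub_le m hst.le (by rwa [div_le_iff₀' hr'] at hm')
      _ = 2 * (r ^ (m + 1)) ^ α := by
          rw [← Real.rpow_natCast r, ← Real.rpow_mul hr.le, mul_comm _ α, Real.rpow_mul hr.le, hrα,
            Real.rpow_natCast, pow_succ]
          ring
      _ ≤ 2 * ((t - s) / (1 - 2 * r)) ^ α := by gcongr

theorem eventuallyConst_of_lt (h : IsCantor r Φ) {x : ℝ} (hx : x < 1 - r)
    (hconst : EventuallyConst Φ (𝓝 (x / r))) : EventuallyConst Φ (𝓝 x) := by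
  have hlim : Tendsto (· / r) (𝓝 x) (𝓝 (x / r)) := tendsto_id.div_const r
  refine ((hconst.comp_tendsto hlim).comp (· / 2)).congr ?_
  filter_upwards [eventually_lt_nhds hx] with u hu using (h.apply_of_le hu.le).symm

theorem eventuallyConst_of_gt (h : IsCantor r Φ) {x : ℝ} (hx : r < x)
    (hconst : EventuallyConst Φ (𝓝 ((x - 1 + r) / r))) : EventuallyConst Φ (𝓝 x) := by
  have hlim : Tendsto (fun u => (u - 1 + r) / r) (𝓝 x) (𝓝 ((x - 1 + r) / r)) :=
    Continuous.tendsto (by fun_prop) x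
  refine ((hconst.comp_tendsto hlim).comp (fun y => (1 + y) / 2)).congr ?_
  filter_upwards [eventually_gt_nhds hx] with u hu using (h.apply_of_ge hu.le).symm

theorem exists_eventuallyConst (h : IsCantor r Φ) (m : ℕ) {a b : ℝ} (hab : r ^ m < b - a) :
    ∃ x ∈ Ioo a b, EventuallyConst Φ (𝓝 x) := by
  have hr := h.ratio_pos
  have hr' := h.ratio_lt
  have hlt : a < b := sub_pos.1 ((by positivity : 0 < r ^ m).trans hab)
  induction m generalizing a b with
  | zero =>
    rw [pow_zero] at hab
    rcases lt_or_ge a 0 with ha | ha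
    · obtain ⟨x, hax, hx⟩ := exists_between (lt_min ha hlt)
      refine ⟨x, ⟨hax, hx.trans_le (min_le_right _ _)⟩, (EventuallyConst.const 0).congr ?_⟩
      filter_upwards [eventually_lt_nhds (hx.trans_le (min_le_left _ _))] with u hu
      exact (h.zero u hu.le).symm
    · obtain ⟨x, hx, hxb⟩ := exists_between (max_lt (by linarith : 1 < b) hlt)
      refine ⟨x, ⟨(le_max_right _ _).trans_lt hx, hxb⟩, (EventuallyConst.const 1).congr ?_⟩
      filter_upwards [eventually_gt_nhds ((le_max_left _ _).trans_lt hx)] with u hu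
      exact (h.one u hu.le).symm
  | succ m ih =>
    rw [pow_succ, ← lt_div_iff₀ hr] at hab
    rcases le_or_gt b r with hb | hb
    · obtain ⟨x, ⟨hax, hxb⟩, hconst⟩ := ih (a := a / r) (b := b / r) (by rwa [← sub_div])
        (by gcongr)
      rw [div_lt_iff₀ hr] at hax
      rw [lt_div_iff₀ hr] at hxb
      exact ⟨x * r, ⟨hax, hxb⟩, h.eventuallyConst_of_lt (by linarith) (by field_simp; exact hconst)⟩
    rcases le_or_gt (1 - r) a with ha | ha
    · obtain ⟨x, ⟨hax, hxb⟩, hconst⟩ := ih (a := (a - 1 + r) / r) (b := (b - 1 + r) / r)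
        (by rw [← sub_div]; ring_nf at hab ⊢; exact hab) (by gcongr)
      rw [div_lt_iff₀ hr] at hax
      rw [lt_div_iff₀ hr] at hxb
      refine ⟨x * r + 1 - r, ⟨by linarith, by linarith⟩, h.eventuallyConst_of_gt (by linarith) ?_⟩
      convert hconst using 2
      field_simp
      ring
    · obtain ⟨x, hx, hx'⟩ := exists_between
        (max_lt (lt_min hlt ha) (lt_min hb (by linarith : r < 1 - r)))
      simp only [max_lt_iff, lt_min_iff] at hx hx'
      refine ⟨x, ⟨hx.1, hx'.1⟩, (EventuallyConst.const (1 / 2)).congr ?_⟩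
      filter_upwards [Ioo_mem_nhds hx.2 hx'.2] with u hu
      exact (h.apply_of_mem_Icc (Ioo_subset_Icc_self hu)).symm

theorem denselyConst (h : IsCantor r Φ) : DenselyConst Φ :=
  dense_of_exists_between fun _ _ hab =>
    have ⟨m, hm⟩ := exists_pow_lt_of_lt_one (sub_pos.2 hab) (by linarith [h.ratio_lt] : r < 1)
    have ⟨x, hx, hconst⟩ := h.exists_eventuallyConst m hm
    ⟨x, hconst, hx⟩

end IsCantor

end CantorFunction

section CantorOscillation

variable {r x ω : ℝ} {D Φ θ φ : ℝ → ℝ}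

/-- The primitive of a density `D`, normalised to vanish at `0`. -/
noncomputable def primitive (D : ℝ → ℝ) (u : ℝ) : ℝ :=
  ∫ v in (0 : ℝ)..u, D v

theorem primitive_zero (D : ℝ → ℝ) : primitive D 0 = 0 :=
  intervalIntegral.integral_same

theorem primitive_sub_primitive (hD : Continuous D) (a b : ℝ) :
    primitive D b - primitive D a = ∫ v in a..b, D v :=
  intervalIntegral.integral_interval_sub_left (hD.intervalIntegrable _ _)
    (hD.intervalIntegrable _ _)

theorem hasDerivAt_primitive (hD : Continuous D) (u : ℝ) : HasDerivAt (primitive D) (D u) u :=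
  intervalIntegral.integral_hasDerivAt_right (hD.intervalIntegrable _ _)
    (hD.stronglyMeasurableAtFilter _ _) hD.continuousAt

theorem continuous_primitive (hD : Continuous D) : Continuous (primitive D) :=
  continuous_iff_continuousAt.2 fun u => (hasDerivAt_primitive hD u).continuousAt

theorem norm_integral_exp_le_sub {a b : ℝ} (hab : a ≤ b) (θ : ℝ → ℝ) :
    ‖∫ u in a..b, Complex.exp (θ u * Complex.I)‖ ≤ b - a := by
  simpa [abs_of_nonneg (sub_nonneg.2 hab)] using
    intervalIntegral.norm_integral_le_of_norm_le_const (a := a) (b := b) (C := 1)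
      fun u _ => (Complex.norm_exp_ofReal_mul_I (θ u)).le

theorem norm_integral_exp_of_affine_eq {s τ d : ℝ} (hτ : 0 ≤ τ)
    (h : ∀ v ∈ Icc (0 : ℝ) 1, θ (s + τ * v) = d + φ v) :
    ‖∫ t in s..s + τ, Complex.exp (θ t * Complex.I)‖ =
      τ * ‖∫ v in (0 : ℝ)..1, Complex.exp (φ v * Complex.I)‖ := by
  have hsubst := intervalIntegral.smul_integral_comp_add_mul (a := 0) (b := 1)
    (fun t => Complex.exp (θ t * Complex.I)) τ s
  rw [mul_zero, add_zero, mul_one] at hsubst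
  have hpull : ∫ v in (0 : ℝ)..1, Complex.exp (θ (s + τ * v) * Complex.I) =
      Complex.exp (d * Complex.I) * ∫ v in (0 : ℝ)..1, Complex.exp (φ v * Complex.I) := by
    rw [← intervalIntegral.integral_const_mul]
    refine intervalIntegral.integral_congr fun v hv => ?_
    rw [uIcc_of_le zero_le_one] at hv
    simp only [h v hv, Complex.ofReal_add, add_mul, Complex.exp_add]
  rw [← hsubst, hpull, norm_smul, norm_mul, Complex.norm_exp_ofReal_mul_I, one_mul,
    Real.norm_eq_abs, abs_of_nonneg hτ]

theorem norm_integral_exp_linear_mul_le {a b : ℝ} (hab : a ≤ b) (c y : ℝ) :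
    ‖∫ u in a..b, Complex.exp ((c + y * u : ℝ) * Complex.I)‖ * |y| ≤ 2 := by
  rcases eq_or_ne y 0 with rfl | hy
  · simp
  rw [← le_div_iff₀ (abs_pos.2 hy)]
  refine norm_integral_exp_le_of_monotoneOn_deriv (φ := fun _ => y) hab (abs_pos.2 hy)
    (fun u _ => by simpa using ((hasDerivAt_id u).const_mul y).const_add c) continuousOn_const
    monotoneOn_const ?_
  rcases abs_choice y with h | h
  · exact .inl fun _ _ => h.le
  · exact .inr fun _ _ => by rw [h, neg_neg]

theorem norm_integral_exp_linear_le {a b : ℝ} (hab : a ≤ b) (hab' : b - a ≤ 1) (c y : ℝ) :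
    ‖∫ u in a..b, Complex.exp ((c + y * u : ℝ) * Complex.I)‖ ≤ 3 / (1 + |y|) := by
  rw [le_div_iff₀ (by positivity)]
  linarith [norm_integral_exp_linear_mul_le hab c y,
    (norm_integral_exp_le_sub hab fun u => c + y * u).trans hab']

/-- The oscillatory integral `∫₀¹ exp (i (x P(u) - ω u)) du` whose phase involves the primitive
`P` of `D`. -/
noncomputable def oscIntegral (D : ℝ → ℝ) (x ω : ℝ) : ℂ :=
  ∫ u in (0 : ℝ)..1, Complex.exp ((x * primitive D u - ω * u : ℝ) * Complex.I)

theorem norm_oscIntegral_le_one (D : ℝ → ℝ) (x ω : ℝ) : ‖oscIntegral D x ω‖ ≤ 1 := by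
  simpa [oscIntegral] using
    norm_integral_exp_le_sub zero_le_one fun u => x * primitive D u - ω * u

theorem oscIntegral_neg_neg (D : ℝ → ℝ) (x ω : ℝ) :
    oscIntegral D (-x) (-ω) = starRingEnd ℂ (oscIntegral D x ω) := by
  rw [oscIntegral, oscIntegral, ← intervalIntegral.intervalIntegral_conj]
  congr 1 with u
  rw [← Complex.exp_conj, map_mul, Complex.conj_I, Complex.conj_ofReal]
  push_cast
  ring_nf

theorem eLpNorm_oscIntegral_neg {p : ℝ} (hp : 0 < p) (Φ : ℝ → ℝ) (x τ c : ℝ) :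
    eLpNorm (fun k : ℤ => oscIntegral Φ (-x) (k * τ + c)) (ENNReal.ofReal p) .count =
      eLpNorm (fun k : ℤ => oscIntegral Φ x (k * τ + -c)) (ENNReal.ofReal p) .count := by
  rw [eLpNorm_count_ofReal hp, eLpNorm_count_ofReal hp, ← (Equiv.neg ℤ).tsum_eq]
  congr 3 with k
  rw [← ofReal_norm, ← ofReal_norm, ← RCLike.norm_conj, ← oscIntegral_neg_neg]
  congr 5
  · ring
  · push_cast [Equiv.neg_apply]
    ring

theorem hasDerivAt_phase (hD : Continuous D) (x ω u : ℝ) :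
    HasDerivAt (fun u => x * primitive D u - ω * u) (x * D u - ω) u := by
  simpa using ((hasDerivAt_primitive hD u).const_mul x).fun_sub ((hasDerivAt_id u).const_mul ω)

namespace IsRamp

theorem norm_oscIntegral_mul_neg_le (hf : IsRamp Φ) (hΦ : Continuous Φ) (hx : 0 ≤ x) (hω : ω ≤ 0) :
    ‖oscIntegral Φ x ω‖ * -ω ≤ 2 := by
  rcases hω.eq_or_lt with rfl | hω
  · simp
  rw [← le_div_iff₀ (neg_pos.2 hω)]
  exact norm_integral_exp_le_of_monotoneOn_deriv zero_le_one (neg_pos.2 hω)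
    (fun u _ => hasDerivAt_phase hΦ x ω u) (by fun_prop)
    (fun u _ v _ huv => by have := hf.mono huv; gcongr)
    (.inl fun u _ => by linarith [mul_nonneg hx (hf.nonneg u)])

theorem norm_oscIntegral_mul_sub_le (hf : IsRamp Φ) (hΦ : Continuous Φ) (hx : 0 ≤ x) (hω : x ≤ ω) :
    ‖oscIntegral Φ x ω‖ * (ω - x) ≤ 2 := by
  rcases hω.eq_or_lt with rfl | hω
  · simp
  rw [← le_div_iff₀ (sub_pos.2 hω)]
  exact norm_integral_exp_le_of_monotoneOn_deriv zero_le_one (sub_pos.2 hω)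
    (fun u _ => hasDerivAt_phase hΦ x ω u) (by fun_prop)
    (fun u _ v _ huv => by have := hf.mono huv; gcongr)
    (.inr fun u _ => by linarith [mul_le_of_le_one_right hx (hf.le_one u)])

theorem norm_oscIntegral_le_of_le_one (hf : IsRamp Φ) (hΦ : Continuous Φ) (hx : 0 ≤ x)
    (hx' : x ≤ 1) (ω : ℝ) : ‖oscIntegral Φ x ω‖ ≤ 6 * (1 + |ω|)⁻¹ := by
  rw [← div_eq_mul_inv, le_div_iff₀ (by positivity)]
  have hle := norm_oscIntegral_le_one Φ x ω
  rcases le_total ω 0 with hω | hω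
  · rw [abs_of_nonpos hω]
    linarith [hf.norm_oscIntegral_mul_neg_le hΦ hx hω]
  rw [abs_of_nonneg hω]
  rcases le_total x ω with hxω | hxω
  · nlinarith [hf.norm_oscIntegral_mul_sub_le hΦ hx hxω, norm_nonneg (oscIntegral Φ x ω)]
  · nlinarith [norm_nonneg (oscIntegral Φ x ω)]

theorem primitive_of_nonpos (hf : IsRamp Φ) {u : ℝ} (hu : u ≤ 0) : primitive Φ u = 0 := by
  rw [primitive, intervalIntegral.integral_congr (g := fun _ => 0)
    fun v hv => hf.zero v (uIcc_of_ge hu ▸ hv).2, intervalIntegral.integral_zero]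

theorem primitive_of_one_le (hf : IsRamp Φ) (hΦ : Continuous Φ) {u : ℝ} (hu : 1 ≤ u) :
    primitive Φ u = primitive Φ 1 + (u - 1) := by
  rw [← sub_eq_iff_eq_add', primitive_sub_primitive hΦ, intervalIntegral.integral_congr
    (g := fun _ => 1) fun v hv => hf.one v (uIcc_of_le hu ▸ hv).1, integral_one]

end IsRamp

/-- `K` bounds the `ℓ^p` norms of the oscillatory integrals of `Φ` sampled along arithmetic
progressions, uniformly in the amplitude of the phase. -/
def IsSampledBound (p K : ℝ) (Φ : ℝ → ℝ) : Prop :=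
  ∀ x τ c : ℝ, 0 < τ → τ ≤ 1 →
    eLpNorm (fun k : ℤ => oscIntegral Φ x (k * τ + c)) (ENNReal.ofReal p) .count ≤
      ENNReal.ofReal (K * τ ^ (-(1 / p)))

theorem two_rpow_mul_lt_one {p : ℝ} (hr : 0 < r) (hp : 0 < p) (hrp : 2 * r ^ (p - 1) < 1) :
    2 ^ (1 / p) * (r * r ^ (-(1 / p))) < 1 := by
  calc 2 ^ (1 / p) * (r * r ^ (-(1 / p))) = (2 * r ^ (p - 1)) ^ (1 / p) := by
        have hexp : (p - 1) * (1 / p) = 1 + -(1 / p) := by field_simp; ring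
        rw [Real.mul_rpow two_pos.le (by positivity), ← Real.rpow_mul hr.le, hexp,
          Real.rpow_add hr, Real.rpow_one]
    _ < 1 := Real.rpow_lt_one (by positivity) hrp (by positivity)

theorem continuous_of_abs_sub_le_rpow {f : ℝ → ℝ} {C α : ℝ} (hα : 0 < α)
    (hf : ∀ s t, |f s - f t| ≤ C * |s - t| ^ α) : Continuous f := by
  refine continuous_iff_continuousAt.2 fun t => tendsto_iff_dist_tendsto_zero.2 <|
    squeeze_zero (fun _ => dist_nonneg) (hf · t) ?_
  have hcont : Continuous fun s => C * |s - t| ^ α :=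
    ((continuous_id.sub continuous_const).abs.rpow_const fun _ => .inr hα.le).const_mul C
  simpa only [sub_self, abs_zero, Real.zero_rpow hα.ne', mul_zero] using hcont.tendsto t

namespace IsCantor

theorem continuous (h : IsCantor r Φ) : Continuous Φ := by
  have hr := h.ratio_pos
  have hr' := h.ratio_lt
  have hα : 0 < Real.logb r (1 / 2) :=
    Real.logb_pos_of_base_lt_one hr (by linarith) (by norm_num) (by norm_num)
  obtain ⟨C, -, hΦ⟩ := h.exists_holder hα
    (Real.rpow_logb hr (by linarith) (by norm_num : (0 : ℝ) < 1 / 2))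
  exact continuous_of_abs_sub_le_rpow hα hΦ

theorem primitive_eq (h : IsCantor r Φ) (u : ℝ) :
    primitive Φ u = r / 2 * (primitive Φ (u / r) + primitive Φ ((u - 1 + r) / r)) := by
  have hr := h.ratio_pos
  have hderiv (u : ℝ) : HasDerivAt (fun u => primitive Φ u -
      r / 2 * (primitive Φ (u / r) + primitive Φ ((u - 1 + r) / r))) 0 u := by
    have hleft := (hasDerivAt_primitive h.continuous (u / r)).comp u ((hasDerivAt_id u).div_const r)
    have hright := (hasDerivAt_primitive h.continuous ((u - 1 + r) / r)).comp u
      ((((hasDerivAt_id u).sub_const 1).add_const r).div_const r)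
    refine ((hasDerivAt_primitive h.continuous u).fun_sub
      ((hleft.fun_add hright).const_mul (r / 2))).congr_deriv ?_
    nth_rw 1 [← h.selfSimilarStep_eq, selfSimilarStep]
    field_simp
    ring
  have hconst := is_const_of_deriv_eq_zero (fun u => (hderiv u).differentiableAt)
    (fun u => (hderiv u).deriv) u 0
  rw [zero_div, primitive_zero, h.primitive_of_nonpos (u := (0 - 1 + r) / r)
    (div_nonpos_of_nonpos_of_nonneg (by linarith [h.ratio_lt]) hr.le)] at hconst
  linarith

theorem primitive_of_le (h : IsCantor r Φ) {u : ℝ} (hu : u ≤ 1 - r) :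
    primitive Φ u = r / 2 * primitive Φ (u / r) := by
  rw [h.primitive_eq, h.primitive_of_nonpos (u := (u - 1 + r) / r)
    (div_nonpos_of_nonpos_of_nonneg (by linarith) h.ratio_pos.le), add_zero]

theorem primitive_of_ge (h : IsCantor r Φ) {u : ℝ} (hu : r ≤ u) :
    primitive Φ u =
      r / 2 * (primitive Φ 1 - 1) + u / 2 + r / 2 * primitive Φ ((u - 1 + r) / r) := by
  have hr := h.ratio_pos
  rw [h.primitive_eq, h.primitive_of_one_le h.continuous (u := u / r)
    (by rwa [le_div_iff₀ hr, one_mul])]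
  field_simp
  ring

theorem norm_integral_exp_middle_le (h : IsCantor r Φ) (x ω : ℝ) :
    ‖∫ u in r..(1 - r), Complex.exp ((x * primitive Φ u - ω * u : ℝ) * Complex.I)‖ ≤
      3 / (1 + |x / 2 - ω|) := by
  have hr := h.ratio_pos
  have hr' := h.ratio_lt
  rw [intervalIntegral.integral_congr (g := fun u => Complex.exp
    ((x * (r / 2 * (primitive Φ 1 - 1)) + (x / 2 - ω) * u : ℝ) * Complex.I)) fun u hu => ?_]
  · exact norm_integral_exp_linear_le (by linarith) (by linarith) _ _
  rw [uIcc_of_le (by linarith)] at hu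
  beta_reduce
  rw [h.primitive_of_ge hu.1, h.primitive_of_nonpos (u := (u - 1 + r) / r)
    (div_nonpos_of_nonpos_of_nonneg (by linarith [hu.2]) hr.le)]
  congr 3
  ring

theorem norm_oscIntegral_le_three_terms (h : IsCantor r Φ) (x ω : ℝ) :
    ‖oscIntegral Φ x ω‖ ≤ r * ‖oscIntegral Φ (x * r / 2) (r * ω)‖ + 3 / (1 + |x / 2 - ω|) +
      r * ‖oscIntegral Φ (x * r / 2) (r * (ω - x / 2))‖ := by
  have hr := h.ratio_pos
  have hr' := h.ratio_lt
  set θ : ℝ → ℝ := fun u => x * primitive Φ u - ω * u with hθ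
  have hleft : ‖∫ u in (0 : ℝ)..r, Complex.exp (θ u * Complex.I)‖ =
      r * ‖oscIntegral Φ (x * r / 2) (r * ω)‖ := by
    have := norm_integral_exp_of_affine_eq (θ := θ) (s := 0) (d := 0)
      (φ := fun v => x * r / 2 * primitive Φ v - r * ω * v) hr.le fun v hv => by
        simp only [hθ, zero_add]
        rw [h.primitive_of_le (by nlinarith [hv.2]), mul_div_cancel_left₀ _ hr.ne']
        ring
    rwa [zero_add] at this
  have hright : ‖∫ u in (1 - r)..1, Complex.exp (θ u * Complex.I)‖ =
      r * ‖oscIntegral Φ (x * r / 2) (r * (ω - x / 2))‖ := by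
    have := norm_integral_exp_of_affine_eq (θ := θ) (s := 1 - r)
      (d := x * (r / 2 * (primitive Φ 1 - 1)) + (x / 2 - ω) * (1 - r))
      (φ := fun v => x * r / 2 * primitive Φ v - r * (ω - x / 2) * v) hr.le fun v hv => by
        simp only [hθ]
        rw [h.primitive_of_ge (by nlinarith [hv.1]),
          (by field_simp; ring : (1 - r + r * v - 1 + r) / r = v)]
        ring
    rwa [sub_add_cancel] at this
  have hmid := h.norm_integral_exp_middle_le x ω
  have hint (a b : ℝ) : IntervalIntegrable (fun u => Complex.exp (θ u * Complex.I)) volume a b := by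
    have := continuous_primitive h.continuous
    exact Continuous.intervalIntegrable (by fun_prop) a b
  calc ‖oscIntegral Φ x ω‖ = ‖(∫ u in (0 : ℝ)..r, Complex.exp (θ u * Complex.I)) +
        (∫ u in r..(1 - r), Complex.exp (θ u * Complex.I)) +
        ∫ u in (1 - r)..1, Complex.exp (θ u * Complex.I)‖ := by
        rw [intervalIntegral.integral_add_adjacent_intervals (hint _ _) (hint _ _),
          intervalIntegral.integral_add_adjacent_intervals (hint _ _) (hint _ _), oscIntegral]
    _ ≤ _ := by
        rw [← hleft, ← hright]
        exact norm_add₃_le.trans (by gcongr)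

/-- At most one of the two rescaled frequencies is resonant. -/
theorem norm_oscIntegral_le_or (h : IsCantor r Φ) (hx : 0 ≤ x) (ω : ℝ) :
    ‖oscIntegral Φ x ω‖ ≤
        r * ‖oscIntegral Φ (x * r / 2) (r * ω)‖ + 6 * (1 + |ω - x / 2|)⁻¹ ∨
      ‖oscIntegral Φ x ω‖ ≤
        r * ‖oscIntegral Φ (x * r / 2) (r * (ω - x / 2))‖ + 6 * (1 + |ω - x / 2|)⁻¹ := by
  have hr := h.ratio_pos
  have hr' := h.ratio_lt
  have hx' : 0 ≤ x * r / 2 := by positivity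
  have hsplit := h.norm_oscIntegral_le_three_terms x ω
  rw [abs_sub_comm] at hsplit
  have hnonres {w : ℝ} (hw : w ≤ 1) (hdecay : w * (r * |ω - x / 2|) ≤ 2) :
      r * w + 3 / (1 + |ω - x / 2|) ≤ 6 * (1 + |ω - x / 2|)⁻¹ := by
    have : r * w ≤ 3 / (1 + |ω - x / 2|) := by
      rw [le_div_iff₀ (by positivity)]
      nlinarith
    rw [div_eq_mul_inv] at this ⊢
    linarith
  rcases le_total ω (x / 2) with hω | hω
  · left
    have := hnonres (norm_oscIntegral_le_one Φ (x * r / 2) (r * (ω - x / 2))) <| by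
      rw [abs_of_nonpos (by linarith), mul_neg]
      exact h.norm_oscIntegral_mul_neg_le h.continuous hx'
        (mul_nonpos_of_nonneg_of_nonpos hr.le (by linarith))
    linarith
  · right
    have := hnonres (norm_oscIntegral_le_one Φ (x * r / 2) (r * ω)) <| by
      rw [abs_of_nonneg (by linarith), (by ring : r * (ω - x / 2) = r * ω - x * r / 2)]
      exact h.norm_oscIntegral_mul_sub_le h.continuous hx' (by nlinarith)
    linarith

/-- The resonant piece has the same form with `x` shrunk by the factor `r / 2`, so the bound
propagates by induction on the size of `x` once `(2 * r ^ (p - 1)) ^ (1 / p) < 1`. -/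
theorem eLpNorm_oscIntegral_le_of_le_pow (h : IsCantor r Φ) {p K S : ℝ} (hp : 1 < p)
    (hS : 0 ≤ S) (hSK : S ≤ K) (hK : 2 ^ (1 / p) * (r * r ^ (-(1 / p)) * K + S) ≤ K)
    (hbase : ∀ τ c : ℝ, 0 < τ → τ ≤ 1 →
      eLpNorm (fun k : ℤ => 6 * (1 + |k * τ + c|)⁻¹) (ENNReal.ofReal p) .count ≤
        ENNReal.ofReal (S * τ ^ (-(1 / p))))
    (m : ℕ) {x τ : ℝ} (c : ℝ) (hx : 0 ≤ x) (hxm : x ≤ (2 / r) ^ m) (hτ : 0 < τ) (hτ' : τ ≤ 1) :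
    eLpNorm (fun k : ℤ => oscIntegral Φ x (k * τ + c)) (ENNReal.ofReal p) .count ≤
      ENNReal.ofReal (K * τ ^ (-(1 / p))) := by
  have hr := h.ratio_pos
  have hr' := h.ratio_lt
  induction m generalizing x τ c with
  | zero =>
    refine (eLpNorm_mono_real fun k => ?_).trans ((hbase τ c hτ hτ').trans (by gcongr))
    exact h.norm_oscIntegral_le_of_le_one h.continuous hx (by simpa using hxm) _
  | succ m ih =>
    have hxm' : x * r / 2 ≤ (2 / r) ^ m := by
      rw [pow_succ, ← div_le_iff₀ (by positivity)] at hxm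
      exact (by field_simp : x * r / 2 = x / (2 / r)).trans_le hxm
    have hle (c' : ℝ) := ih c' (by positivity) hxm' (by positivity : 0 < r * τ)
      (mul_le_one₀ (by linarith) hτ.le hτ')
    have hK0 := hS.trans hSK
    calc _ ≤ 2 ^ (1 / p) * (ENNReal.ofReal r * ENNReal.ofReal (K * (r * τ) ^ (-(1 / p))) +
          ENNReal.ofReal (S * τ ^ (-(1 / p)))) := by
          refine eLpNorm_count_le_of_forall_le_add_or hp.le hr.le (hle (r * c))
            (hle (r * (c - x / 2))) (hbase τ (c - x / 2) hτ hτ') fun k => ?_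
          have := h.norm_oscIntegral_le_or hx (k * τ + c)
          ring_nf at this ⊢
          exact this
      _ = ENNReal.ofReal (2 ^ (1 / p) * (r * r ^ (-(1 / p)) * K + S) * τ ^ (-(1 / p))) := by
          rw [← ENNReal.ofReal_mul hr.le, ← ENNReal.ofReal_add (by positivity) (by positivity),
            ← ENNReal.ofReal_ofNat, ENNReal.ofReal_rpow_of_pos two_pos,
            ← ENNReal.ofReal_mul (by positivity), Real.mul_rpow hr.le hτ.le]
          ring_nf
      _ ≤ _ := by gcongr

theorem exists_isSampledBound (h : IsCantor r Φ) {p : ℝ} (hp : 1 < p)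
    (hrp : 2 * r ^ (p - 1) < 1) : ∃ K, IsSampledBound p K Φ := by
  have hr := h.ratio_pos
  have hr' := h.ratio_lt
  obtain ⟨K₀, hK₀, hinv⟩ := exists_eLpNorm_inv_one_add_abs_le hp
  set q := 2 ^ (1 / p) * (r * r ^ (-(1 / p))) with hq
  have hq1 : q < 1 := two_rpow_mul_lt_one hr (by linarith) hrp
  set S := 6 * K₀ with hS
  have hbase (τ c : ℝ) (hτ : 0 < τ) (hτ' : τ ≤ 1) :
      eLpNorm (fun k : ℤ => 6 * (1 + |k * τ + c|)⁻¹) (ENNReal.ofReal p) .count ≤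
        ENNReal.ofReal (S * τ ^ (-(1 / p))) := by
    rw [hS, mul_assoc, ENNReal.ofReal_mul (by norm_num)]
    refine (eLpNorm_const_smul (6 : ℝ) _ _ _).trans_le ?_
    rw [Real.enorm_of_nonneg (by norm_num)]
    gcongr
    exact hinv τ c hτ hτ'
  set K := 2 ^ (1 / p) * S / (1 - q) with hK
  have hKeq : 2 ^ (1 / p) * (r * r ^ (-(1 / p)) * K + S) = K := by
    have : 1 - q ≠ 0 := by linarith
    rw [mul_add, ← mul_assoc, ← mul_assoc, mul_assoc (2 ^ (1 / p)), ← hq, hK]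
    field_simp
    ring
  have hSK : S ≤ K := by
    rw [hK, le_div_iff₀ (by linarith), mul_comm]
    gcongr
    linarith [(by positivity : 0 ≤ q), Real.one_le_rpow one_le_two (by positivity : 0 ≤ 1 / p)]
  have hnonneg {x : ℝ} (hx : 0 ≤ x) {τ : ℝ} (c : ℝ) (hτ : 0 < τ) (hτ' : τ ≤ 1) :
      eLpNorm (fun k : ℤ => oscIntegral Φ x (k * τ + c)) (ENNReal.ofReal p) .count ≤
        ENNReal.ofReal (K * τ ^ (-(1 / p))) := by
    obtain ⟨m, hm⟩ := pow_unbounded_of_one_lt x (by rw [one_lt_div hr]; linarith : 1 < 2 / r)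
    exact h.eLpNorm_oscIntegral_le_of_le_pow hp (by positivity) hSK hKeq.le hbase m c hx hm.le
      hτ hτ'
  refine ⟨K, fun x τ c hτ hτ' => ?_⟩
  rcases le_total 0 x with hx | hx
  · exact hnonneg hx c hτ hτ'
  · rw [← neg_neg x, eLpNorm_oscIntegral_neg (by linarith)]
    exact hnonneg (neg_nonneg.2 hx) (-c) hτ hτ'

end IsCantor

end CantorOscillation

section Perturbation

variable {p K r a b c y τ : ℝ} {n : ℤ} {D D' Φ : ℝ → ℝ}

theorem ApNorm_eq_eLpNorm (hp : 0 < p) (f : ℝ → ℂ) :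
    ApNorm p f = eLpNorm (fourierCoef f) (ENNReal.ofReal p) .count :=
  (eLpNorm_count_ofReal hp (fourierCoef f)).symm

/-- The function `e^{inh}`, where `h(t) = t + ∫₀ᵗ D` is the circle map with derivative `1 + D`. -/
noncomputable def expMap (D : ℝ → ℝ) (n : ℤ) (t : ℝ) : ℂ :=
  Complex.exp ((n * (t + primitive D t) : ℝ) * Complex.I)

/-- The contribution of `[a, b]` to the Fourier coefficients of `expMap D n`, up to the factor
`1 / (2π)`. -/
noncomputable def partialCoef (D : ℝ → ℝ) (n : ℤ) (a b : ℝ) (k : ℤ) : ℂ :=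
  ∫ t in a..b, Complex.exp ((n * (t + primitive D t) - k * t : ℝ) * Complex.I)

theorem fourierCoef_expMap (D : ℝ → ℝ) (n : ℤ) :
    fourierCoef (expMap D n) = (1 / (2 * π)) • partialCoef D n 0 (2 * π) := by
  ext k
  rw [fourierCoef, Pi.smul_apply, Complex.real_smul, partialCoef]
  push_cast
  congr 2 with t
  rw [expMap, ← Complex.exp_add]
  push_cast
  ring_nf

theorem partialCoef_add_adjacent (hD : Continuous D) (n : ℤ) (a b c : ℝ) :
    partialCoef D n a b + partialCoef D n b c = partialCoef D n a c := by
  have := continuous_primitive hD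
  ext k
  exact intervalIntegral.integral_add_adjacent_intervals
    (Continuous.intervalIntegrable (by fun_prop) _ _)
    (Continuous.intervalIntegrable (by fun_prop) _ _)

theorem partialCoef_congr (h : EqOn (primitive D) (primitive D') (uIcc a b)) :
    partialCoef D n a b = partialCoef D' n a b := by
  ext k
  exact intervalIntegral.integral_congr fun t ht => by simp only [h ht]

/-- `D` is an affine image of the copy of `Φ` on `[c, c + τ]`. -/
def IsAffineCopyOn (Φ D : ℝ → ℝ) (c τ : ℝ) : Prop :=
  ∃ b y, ∀ t ∈ Icc c (c + τ), D t = b + y * Φ ((t - c) / τ)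

theorem primitive_of_affine_copy (hD : Continuous D) (hΦ : Continuous Φ) (hτ : 0 < τ)
    (hcopy : ∀ t ∈ Icc c (c + τ), D t = b + y * Φ ((t - c) / τ)) {v : ℝ} (hv : v ∈ Icc (0 : ℝ) 1) :
    primitive D (c + τ * v) = primitive D c + τ * (b * v + y * primitive Φ v) := by
  have hsubst := intervalIntegral.smul_integral_comp_add_mul (a := 0) (b := v) D τ c
  rw [mul_zero, add_zero] at hsubst
  rw [← sub_eq_iff_eq_add', primitive_sub_primitive hD, ← hsubst, smul_eq_mul,
    intervalIntegral.integral_congr (g := fun w => b + y * Φ w) fun w hw => ?_,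
    intervalIntegral.integral_add (by simp) (Continuous.intervalIntegrable (by fun_prop) _ _),
    intervalIntegral.integral_const, intervalIntegral.integral_const_mul, sub_zero, smul_eq_mul,
    mul_comm v, primitive]
  rw [uIcc_of_le hv.1] at hw
  simp only
  rw [hcopy _ ⟨by nlinarith [hw.1], by nlinarith [hw.2, hv.2]⟩, add_sub_cancel_left,
    mul_div_cancel_left₀ _ hτ.ne']

theorem norm_partialCoef_of_affine_copy (hD : Continuous D) (hΦ : Continuous Φ) (hτ : 0 < τ)
    (hcopy : ∀ t ∈ Icc c (c + τ), D t = b + y * Φ ((t - c) / τ)) (n k : ℤ) :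
    ‖partialCoef D n c (c + τ) k‖ =
      τ * ‖oscIntegral Φ (n * y * τ) (k * τ + -(n * (1 + b) * τ))‖ :=
  norm_integral_exp_of_affine_eq (d := n * (c + primitive D c) - k * c) hτ.le fun v hv => by
    rw [primitive_of_affine_copy hD hΦ hτ hcopy hv]
    ring

theorem IsAffineCopyOn.eLpNorm_partialCoef_le (hcopy : IsAffineCopyOn Φ D c τ) (hD : Continuous D)
    (hΦ : Continuous Φ) (hK : IsSampledBound p K Φ) (hτ : 0 < τ) (hτ' : τ ≤ 1) (n : ℤ) :
    eLpNorm (partialCoef D n c (c + τ)) (ENNReal.ofReal p) .count ≤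
      ENNReal.ofReal (K * τ ^ (1 - 1 / p)) := by
  obtain ⟨b, y, hcopy⟩ := hcopy
  calc _ = eLpNorm (τ • fun k : ℤ => oscIntegral Φ (n * y * τ) (k * τ + -(n * (1 + b) * τ)))
        (ENNReal.ofReal p) .count := eLpNorm_congr_norm_ae <| .of_forall fun k => by
          rw [norm_partialCoef_of_affine_copy hD hΦ hτ hcopy, Pi.smul_apply, norm_smul,
            Real.norm_of_nonneg hτ.le]
    _ ≤ ENNReal.ofReal τ * ENNReal.ofReal (K * τ ^ (-(1 / p))) := by
        rw [eLpNorm_const_smul, Real.enorm_of_nonneg hτ.le]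
        gcongr
        exact hK _ _ _ hτ hτ'
    _ = _ := by
        rw [← ENNReal.ofReal_mul hτ.le, mul_left_comm, sub_eq_add_neg, Real.rpow_add hτ,
          Real.rpow_one]

/-- A compactly supported combination of three translates of the ramp `Φ` with vanishing integral:
it climbs to `1` on `[0, 1]`, falls to `-1` on `[1, 2]` and returns to `0` on `[2, 3]`. -/
def bump (Φ : ℝ → ℝ) (u : ℝ) : ℝ :=
  Φ u - 2 * Φ (u - 1) + Φ (u - 2)

theorem continuous_bump (hΦ : Continuous Φ) : Continuous (bump Φ) := by
  unfold bump
  fun_prop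

theorem DenselyConst.bump (hΦ : DenselyConst Φ) : DenselyConst (bump Φ) := by
  have htranslate (s : ℝ) : DenselyConst fun u => Φ (u - s) :=
    hΦ.comp_isOpenMap (continuous_sub_right s) (Homeomorph.subRight s).isOpenMap
  convert (hΦ.add ((htranslate 1).comp (-2 * ·))).add (htranslate 2) using 1
  ext u
  simp [_root_.bump, sub_eq_add_neg]

theorem abs_bump_sub_bump_le {C α : ℝ} (hΦ : ∀ s t, |Φ s - Φ t| ≤ C * |s - t| ^ α) (s t : ℝ) :
    |bump Φ s - bump Φ t| ≤ 4 * C * |s - t| ^ α := by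
  have h₀ := abs_le.1 (hΦ s t)
  have h₁ := abs_le.1 (hΦ (s - 1) (t - 1))
  have h₂ := abs_le.1 (hΦ (s - 2) (t - 2))
  rw [sub_sub_sub_cancel_right] at h₁ h₂
  unfold bump
  refine abs_le.2 ⟨?_, ?_⟩ <;> linarith

theorem primitive_bump (hΦ : Continuous Φ) (hramp : IsRamp Φ) (u : ℝ) :
    primitive (bump Φ) u = primitive Φ u - 2 * primitive Φ (u - 1) + primitive Φ (u - 2) := by
  have hshift (s : ℝ) (hs : 0 ≤ s) : ∫ v in (0 : ℝ)..u, Φ (v - s) = primitive Φ (u - s) := by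
    rw [intervalIntegral.integral_comp_sub_right, ← primitive_sub_primitive hΦ,
      hramp.primitive_of_nonpos (u := 0 - s) (by linarith), sub_zero]
  unfold primitive bump at *
  rw [intervalIntegral.integral_add, intervalIntegral.integral_sub,
    intervalIntegral.integral_const_mul, hshift 1 zero_le_one, hshift 2 zero_le_two]
  all_goals exact Continuous.intervalIntegrable (by fun_prop) _ _

namespace IsRamp

theorem bump_of_mem_Icc_zero_one (hΦ : IsRamp Φ) {u : ℝ} (hu : u ∈ Icc (0 : ℝ) 1) :
    bump Φ u = Φ u := by
  simp [bump, hΦ.zero (u - 1) (by linarith [hu.2]), hΦ.zero (u - 2) (by linarith [hu.2])]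

theorem bump_of_mem_Icc_one_two (hΦ : IsRamp Φ) {u : ℝ} (hu : u ∈ Icc (1 : ℝ) 2) :
    bump Φ u = 1 - 2 * Φ (u - 1) := by
  simp [bump, hΦ.one u hu.1, hΦ.zero (u - 2) (by linarith [hu.2])]

theorem bump_of_mem_Icc_two_three (hΦ : IsRamp Φ) {u : ℝ} (hu : u ∈ Icc (2 : ℝ) 3) :
    bump Φ u = -1 + Φ (u - 2) := by
  rw [bump, hΦ.one u (by linarith [hu.1]), hΦ.one (u - 1) (by linarith [hu.1])]
  norm_num

theorem bump_of_notMem_Ioo (hΦ : IsRamp Φ) {u : ℝ} (hu : u ∉ Ioo (0 : ℝ) 3) : bump Φ u = 0 := by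
  rcases le_or_gt u 0 with h | h
  · simp [bump, hΦ.zero u h, hΦ.zero (u - 1) (by linarith), hΦ.zero (u - 2) (by linarith)]
  · have h3 : 3 ≤ u := not_lt.1 fun h' => hu ⟨h, h'⟩
    rw [bump, hΦ.one u (by linarith), hΦ.one (u - 1) (by linarith), hΦ.one (u - 2) (by linarith)]
    norm_num

theorem abs_bump_le_one (hΦ : IsRamp Φ) (u : ℝ) : |bump Φ u| ≤ 1 := by
  have h₁ := hΦ.mono (by linarith : u - 1 ≤ u)
  have h₂ := hΦ.mono (by linarith : u - 2 ≤ u - 1)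
  rw [bump, abs_le]
  constructor <;> linarith [hΦ.le_one u, hΦ.le_one (u - 1), hΦ.nonneg (u - 1), hΦ.nonneg (u - 2)]

theorem primitive_bump_of_notMem_Ioo (hΦ : IsRamp Φ) (hc : Continuous Φ) {u : ℝ}
    (hu : u ∉ Ioo (0 : ℝ) 3) : primitive (bump Φ) u = 0 := by
  rw [primitive_bump hc hΦ]
  rcases le_or_gt u 0 with h | h
  · rw [hΦ.primitive_of_nonpos h, hΦ.primitive_of_nonpos (u := u - 1) (by linarith),
      hΦ.primitive_of_nonpos (u := u - 2) (by linarith)]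
    norm_num
  · have h3 : 3 ≤ u := not_lt.1 fun h' => hu ⟨h, h'⟩
    rw [hΦ.primitive_of_one_le hc (by linarith),
      hΦ.primitive_of_one_le hc (u := u - 1) (by linarith),
      hΦ.primitive_of_one_le hc (u := u - 2) (by linarith)]
    ring

end IsRamp

/-- The density `D` perturbed by a copy of `bump Φ` of height `a` on `[c, c + 3τ]`. -/
noncomputable def addBump (Φ D : ℝ → ℝ) (a c τ t : ℝ) : ℝ :=
  D t + a * bump Φ ((t - c) / τ)

theorem continuous_addBump (hΦ : Continuous Φ) (hD : Continuous D) (a c τ : ℝ) :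
    Continuous (addBump Φ D a c τ) := by
  have := continuous_bump hΦ
  unfold addBump
  fun_prop

theorem DenselyConst.addBump (hΦ : DenselyConst Φ) (hD : DenselyConst D) (a c : ℝ) (hτ : 0 < τ) :
    DenselyConst (addBump Φ D a c τ) := by
  have hopen : IsOpenMap fun t : ℝ => (t - c) / τ := by
    simp only [div_eq_mul_inv]
    exact (Homeomorph.mulRight₀ τ⁻¹ (inv_ne_zero hτ.ne')).isOpenMap.comp
      (Homeomorph.subRight c).isOpenMap
  exact hD.add ((hΦ.bump.comp_isOpenMap (by fun_prop) hopen).comp (a * ·))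

theorem div_notMem_Ioo_of_notMem (hτ : 0 < τ) {t : ℝ} (ht : t ∉ Ioo c (c + 3 * τ)) :
    (t - c) / τ ∉ Ioo (0 : ℝ) 3 := by
  contrapose! ht
  rw [mem_Ioo, lt_div_iff₀ hτ, div_lt_iff₀ hτ] at ht
  exact ⟨by linarith [ht.1], by linarith [ht.2]⟩

namespace IsRamp

theorem addBump_of_notMem_Ioo (hΦ : IsRamp Φ) (hτ : 0 < τ) {t : ℝ} (ht : t ∉ Ioo c (c + 3 * τ)) :
    addBump Φ D a c τ t = D t := by
  rw [addBump, hΦ.bump_of_notMem_Ioo (div_notMem_Ioo_of_notMem hτ ht), mul_zero, add_zero]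

theorem primitive_addBump_of_notMem_Ioo (hΦ : IsRamp Φ) (hc : Continuous Φ) (hD : Continuous D)
    (hc0 : 0 ≤ c) (hτ : 0 < τ) {t : ℝ} (ht : t ∉ Ioo c (c + 3 * τ)) :
    primitive (addBump Φ D a c τ) t = primitive D t := by
  have hbump := continuous_bump hc
  unfold primitive addBump
  rw [intervalIntegral.integral_add (hD.intervalIntegrable _ _)
    (Continuous.intervalIntegrable (by fun_prop) _ _), intervalIntegral.integral_const_mul]
  simp only [sub_div]
  rw [intervalIntegral.integral_comp_div_sub _ hτ.ne', ← primitive_sub_primitive hbump,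
    ← sub_div, ← sub_div,
    hΦ.primitive_bump_of_notMem_Ioo hc (div_notMem_Ioo_of_notMem hτ ht),
    hΦ.primitive_bump_of_notMem_Ioo hc (div_notMem_Ioo_of_notMem hτ fun h => hc0.not_gt h.1),
    sub_zero, smul_zero, mul_zero, add_zero]

end IsRamp

/-- The density `D` is constant on `[c, c + 3τ] ⊆ [0, 2π]`. -/
structure IsFlatWindow (D : ℝ → ℝ) (c τ : ℝ) : Prop where
  pos : 0 < τ
  nonneg : 0 ≤ c
  le_two_pi : c + 3 * τ ≤ 2 * π
  eq_of_mem : ∀ t ∈ Icc c (c + 3 * τ), D t = D c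

namespace IsFlatWindow

theorem isAffineCopyOn (hw : IsFlatWindow D c τ) {j : ℕ} (hj : j < 3) (Φ : ℝ → ℝ) :
    IsAffineCopyOn Φ D (c + j * τ) τ := by
  have hτ := hw.pos
  have hj' : (j : ℝ) + 1 ≤ 3 := by exact_mod_cast hj
  exact ⟨D c, 0, fun t ht => by
    rw [zero_mul, add_zero]
    exact hw.eq_of_mem t ⟨by nlinarith [ht.1, (j.cast_nonneg : (0 : ℝ) ≤ j)], by nlinarith [ht.2]⟩⟩

theorem isAffineCopyOn_addBump (hw : IsFlatWindow D c τ) (hΦ : IsRamp Φ) (a : ℝ) {j : ℕ}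
    (hj : j < 3) : IsAffineCopyOn Φ (addBump Φ D a c τ) (c + j * τ) τ := by
  have hτ := hw.pos
  have hmem {t : ℝ} (ht : t ∈ Icc (c + j * τ) (c + j * τ + τ)) :
      (t - c) / τ ∈ Icc (j : ℝ) (j + 1) := by
    rw [mem_Icc, le_div_iff₀ hτ, div_le_iff₀ hτ]
    exact ⟨by linarith [ht.1], by linarith [ht.2]⟩
  have hwindow {t : ℝ} (ht : (t - c) / τ ∈ Icc (j : ℝ) (j + 1)) : D t = D c := by
    have hj' : (j : ℝ) + 1 ≤ 3 := by exact_mod_cast hj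
    rw [mem_Icc, le_div_iff₀ hτ, div_le_iff₀ hτ] at ht
    exact hw.eq_of_mem t ⟨by nlinarith [ht.1, (j.cast_nonneg : (0 : ℝ) ≤ j)], by nlinarith [ht.2]⟩
  have hshift (t : ℝ) : (t - (c + j * τ)) / τ = (t - c) / τ - j := by
    field_simp
    ring
  have copy (β γ : ℝ) (h : ∀ u ∈ Icc (j : ℝ) (j + 1), bump Φ u = β + γ * Φ (u - j)) :
      IsAffineCopyOn Φ (addBump Φ D a c τ) (c + j * τ) τ :=
    ⟨D c + a * β, a * γ, fun t ht => by
      rw [addBump, hwindow (hmem ht), h _ (hmem ht), hshift]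
      ring⟩
  interval_cases j
  · exact copy 0 1 fun u hu => by simpa using hΦ.bump_of_mem_Icc_zero_one (by simpa using hu)
  · refine copy 1 (-2) fun u hu => ?_
    norm_num at hu
    rw [hΦ.bump_of_mem_Icc_one_two hu]
    push_cast
    ring
  · refine copy (-1) 1 fun u hu => ?_
    norm_num at hu
    rw [hΦ.bump_of_mem_Icc_two_three hu]
    push_cast
    ring

end IsFlatWindow

theorem partialCoef_zero_two_pi (hD : Continuous D) (n : ℤ) (c τ : ℝ) :
    partialCoef D n 0 (2 * π) = partialCoef D n 0 c +
      ∑ j ∈ Finset.range 3, partialCoef D n (c + j * τ) (c + j * τ + τ) +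
        partialCoef D n (c + 3 * τ) (2 * π) := by
  have hwindow : ∑ j ∈ Finset.range 3, partialCoef D n (c + j * τ) (c + j * τ + τ) =
      partialCoef D n c (c + 3 * τ) := by
    rw [Finset.sum_range_succ, Finset.sum_range_succ, Finset.sum_range_one, Nat.cast_zero,
      Nat.cast_one, Nat.cast_ofNat, zero_mul, add_zero, one_mul, partialCoef_add_adjacent hD,
      (by ring : c + τ + τ = c + 2 * τ), partialCoef_add_adjacent hD,
      (by ring : c + 2 * τ + τ = c + 3 * τ)]
  rw [hwindow, partialCoef_add_adjacent hD, partialCoef_add_adjacent hD]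

theorem IsFlatWindow.fourierCoef_expMap_addBump (hw : IsFlatWindow D c τ) (hΦ : IsRamp Φ)
    (hc : Continuous Φ) (hD : Continuous D) (a : ℝ) (n : ℤ) :
    fourierCoef (expMap (addBump Φ D a c τ) n) = fourierCoef (expMap D n) +
      (1 / (2 * π)) • ∑ j ∈ Finset.range 3,
        (partialCoef (addBump Φ D a c τ) n (c + j * τ) (c + j * τ + τ) -
          partialCoef D n (c + j * τ) (c + j * τ + τ)) := by
  have hτ := hw.pos
  have heq (t : ℝ) (ht : t ∉ Ioo c (c + 3 * τ)) :=
    hΦ.primitive_addBump_of_notMem_Ioo (a := a) hc hD hw.nonneg hτ ht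
  have hleft : partialCoef (addBump Φ D a c τ) n 0 c = partialCoef D n 0 c :=
    partialCoef_congr fun t ht => heq t fun h => h.1.not_ge (uIcc_of_le hw.nonneg ▸ ht).2
  have hright : partialCoef (addBump Φ D a c τ) n (c + 3 * τ) (2 * π) =
      partialCoef D n (c + 3 * τ) (2 * π) :=
    partialCoef_congr fun t ht => heq t fun h => h.2.not_ge (uIcc_of_le hw.le_two_pi ▸ ht).1
  rw [fourierCoef_expMap, fourierCoef_expMap,
    partialCoef_zero_two_pi (continuous_addBump hc hD a c τ) n c τ,
    partialCoef_zero_two_pi hD n c τ, hleft, hright, Finset.sum_sub_distrib, ← smul_add]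
  congr 1
  abel

theorem IsFlatWindow.ApNorm_expMap_addBump_le (hw : IsFlatWindow D c τ) (hΦ : IsRamp Φ)
    (hc : Continuous Φ) (hD : Continuous D) (hp : 1 ≤ p) (hK : IsSampledBound p K Φ)
    (hτ : τ ≤ 1) (a : ℝ) (n : ℤ) :
    ApNorm p (expMap (addBump Φ D a c τ) n) ≤
      ApNorm p (expMap D n) + ENNReal.ofReal (K * τ ^ (1 - 1 / p)) := by
  have hp' : 1 ≤ ENNReal.ofReal p := by simpa using hp
  rw [ApNorm_eq_eLpNorm (by linarith), ApNorm_eq_eLpNorm (by linarith),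
    hw.fourierCoef_expMap_addBump hΦ hc hD]
  refine (eLpNorm_add_le .of_discrete .of_discrete hp').trans ?_
  gcongr
  set ν := ENNReal.ofReal (K * τ ^ (1 - 1 / p))
  have hpiece (j) (hj : j ∈ Finset.range 3) :
      eLpNorm (partialCoef (addBump Φ D a c τ) n (c + j * τ) (c + j * τ + τ) -
        partialCoef D n (c + j * τ) (c + j * τ + τ)) (ENNReal.ofReal p) .count ≤ ν + ν := by
    have hj := Finset.mem_range.1 hj
    exact (eLpNorm_sub_le .of_discrete .of_discrete hp').trans <| add_le_add
      ((hw.isAffineCopyOn_addBump hΦ a hj).eLpNorm_partialCoef_le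
        (continuous_addBump hc hD a c τ) hc hK hw.pos hτ n)
      ((hw.isAffineCopyOn hj Φ).eLpNorm_partialCoef_le hD hc hK hw.pos hτ n)
  rw [eLpNorm_const_smul]
  calc _ ≤ ‖1 / (2 * π)‖ₑ * ∑ _ ∈ Finset.range 3, (ν + ν) := by
        gcongr
        exact (eLpNorm_sum_le (fun _ _ => .of_discrete) hp').trans (Finset.sum_le_sum hpiece)
    _ = ENNReal.ofReal (1 / (2 * π) * 6) * ν := by
        rw [Real.enorm_of_nonneg (by positivity), ENNReal.ofReal_mul (by positivity), mul_assoc,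
          Finset.sum_const, Finset.card_range, nsmul_eq_mul, ENNReal.ofReal_ofNat, ← two_mul,
          ← mul_assoc (_ : ℕ).cast]
        norm_num
    _ ≤ ν := mul_le_of_le_one_left' <| ENNReal.ofReal_le_one.2 <| by
        rw [one_div_mul_eq_div, div_le_one (by positivity)]
        linarith [Real.pi_gt_three]

end Perturbation

section Construction

variable {p α η η' K a c u v τ : ℝ} {D D' D'' Φ : ℝ → ℝ} {S : Set ℝ}

/-- `D` is supported in `[0, 2π]` and has integral zero, so that `t ↦ t + ∫₀ᵗ D` maps `[0, 2π]` to
itself and extends to a map of the circle of degree one. -/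
structure IsBalanced (D : ℝ → ℝ) : Prop where
  continuous : Continuous D
  eq_zero_of_notMem : ∀ t ∉ Ioo 0 (2 * π), D t = 0
  primitive_two_pi : primitive D (2 * π) = 0

theorem isBalanced_zero : IsBalanced 0 :=
  ⟨continuous_zero, fun _ _ => rfl, by simp [primitive]⟩

/-- `D'` differs from `D` by at most `η` in each of the three quantities that the construction has
to control. -/
structure IsPerturbation (p α η : ℝ) (D D' : ℝ → ℝ) : Prop where
  abs_sub_le : ∀ t, |D' t - D t| ≤ η
  holder : ∀ s t, |(D' s - D s) - (D' t - D t)| ≤ η * |s - t| ^ α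
  ApNorm_le : ∀ n, ApNorm p (expMap D' n) ≤ ApNorm p (expMap D n) + ENNReal.ofReal η

namespace IsPerturbation

theorem refl (p α : ℝ) (D : ℝ → ℝ) : IsPerturbation p α 0 D D :=
  ⟨by simp, by simp, by simp⟩

theorem trans (h : IsPerturbation p α η D D') (h' : IsPerturbation p α η' D' D'') (hη : 0 ≤ η)
    (hη' : 0 ≤ η') : IsPerturbation p α (η + η') D D'' where
  abs_sub_le t := by
    linarith [_root_.abs_sub_le (D'' t) (D' t) (D t), h.abs_sub_le t, h'.abs_sub_le t]
  holder s t := by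
    rw [(by ring : D'' s - D s - (D'' t - D t) =
      (D' s - D s - (D' t - D t)) + (D'' s - D' s - (D'' t - D' t))), add_mul]
    exact (abs_add_le _ _).trans (add_le_add (h.holder s t) (h'.holder s t))
  ApNorm_le n := by
    rw [ENNReal.ofReal_add hη hη', ← add_assoc]
    exact (h'.ApNorm_le n).trans (by gcongr; exact h.ApNorm_le n)

theorem mono (h : IsPerturbation p α η D D') (hη : η ≤ η') : IsPerturbation p α η' D D' where
  abs_sub_le t := (h.abs_sub_le t).trans hη
  holder s t := (h.holder s t).trans (by gcongr)
  ApNorm_le n := (h.ApNorm_le n).trans (by gcongr)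

theorem continuous (h : IsPerturbation p α η 0 D) (hα : 0 < α) : Continuous D :=
  continuous_of_abs_sub_le_rpow hα fun s t => by simpa using h.holder s t

end IsPerturbation

theorem exists_flatWindow (hD : DenselyConst D) (hS : S.Finite) (hu : 0 ≤ u) (huv : u < v)
    (hv : v ≤ 2 * π) : ∃ c δ, 0 < δ ∧ ∀ τ, 0 < τ → τ ≤ δ →
      IsFlatWindow D c τ ∧ Icc c (c + 3 * τ) ⊆ Ioo u v \ S := by
  obtain ⟨c, ⟨hflat, hcS⟩, hc⟩ := (Dense.sdiff_finite hD hS).exists_between huv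
  replace hflat : EventuallyConst D (𝓝 c) := hflat
  obtain ⟨y, hy⟩ := eventuallyConst_iff_exists_eventuallyEq.1 hflat
  obtain ⟨δ, hδ, hball⟩ := Metric.mem_nhds_iff.1 <|
    inter_mem hy (inter_mem (Ioo_mem_nhds hc.1 hc.2) (hS.isClosed.isOpen_compl.mem_nhds hcS))
  refine ⟨c, δ / 4, by linarith, fun τ hτ hτδ => ?_⟩
  have hmem (t : ℝ) (ht : t ∈ Icc c (c + 3 * τ)) := @hball t <| by
    rw [Metric.mem_ball, Real.dist_eq, abs_of_nonneg (by linarith [ht.1])]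
    linarith [ht.2]
  have hend := (hmem (c + 3 * τ) ⟨by linarith, le_rfl⟩).2.1
  exact ⟨⟨hτ, hu.trans hc.1.le, hend.2.le.trans hv, fun t ht =>
    (hmem t ht).1.trans hy.self_of_nhds.symm⟩, fun t ht => (hmem t ht).2⟩

theorem IsBalanced.addBump (hD : IsBalanced D) (hw : IsFlatWindow D c τ) (hΦ : IsRamp Φ)
    (hc : Continuous Φ) (a : ℝ) : IsBalanced (addBump Φ D a c τ) where
  continuous := continuous_addBump hc hD.continuous a c τ
  eq_zero_of_notMem t ht := by
    rw [hΦ.addBump_of_notMem_Ioo hw.pos fun h =>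
      ht ⟨hw.nonneg.trans_lt h.1, h.2.trans_le hw.le_two_pi⟩, hD.eq_zero_of_notMem t ht]
  primitive_two_pi := by
    rw [hΦ.primitive_addBump_of_notMem_Ioo hc hD.continuous hw.nonneg hw.pos fun h =>
      hw.le_two_pi.not_gt h.2, hD.primitive_two_pi]

theorem IsFlatWindow.isPerturbation_addBump (hw : IsFlatWindow D c τ) (hΦ : IsRamp Φ)
    (hc : Continuous Φ) (hD : Continuous D) {C : ℝ} (hC : ∀ s t, |Φ s - Φ t| ≤ C * |s - t| ^ α)
    (hp : 1 ≤ p) (hK : IsSampledBound p K Φ) (hτ : τ ≤ 1) (hKτ : K * τ ^ (1 - 1 / p) ≤ η)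
    (ha : 0 ≤ a) (haη : a ≤ η) (haC : a * (4 * C * (τ ^ α)⁻¹) ≤ η) :
    IsPerturbation p α η D (addBump Φ D a c τ) where
  abs_sub_le t := by
    rw [_root_.addBump, add_sub_cancel_left, abs_mul, abs_of_nonneg ha]
    exact (mul_le_of_le_one_right ha (hΦ.abs_bump_le_one _)).trans haη
  holder s t := by
    rw [_root_.addBump, _root_.addBump, add_sub_cancel_left, add_sub_cancel_left, ← mul_sub,
      abs_mul, abs_of_nonneg ha]
    calc _ ≤ a * (4 * C * |(s - c) / τ - (t - c) / τ| ^ α) := by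
          gcongr
          exact abs_bump_sub_bump_le hC _ _
      _ = a * (4 * C * (τ ^ α)⁻¹) * |s - t| ^ α := by
          rw [← sub_div, sub_sub_sub_cancel_right, abs_div, abs_of_pos hw.pos,
            Real.div_rpow (abs_nonneg _) hw.pos.le]
          ring
      _ ≤ _ := by gcongr
  ApNorm_le n := (hw.ApNorm_expMap_addBump_le hΦ hc hD hp hK hτ a n).trans (by gcongr)

theorem exists_isRamp_isSampledBound (hα : 0 < α) (hα1 : α < 1) (hαp : α < p - 1) :
    ∃ (Φ : ℝ → ℝ) (C K : ℝ), IsRamp Φ ∧ DenselyConst Φ ∧ 0 ≤ C ∧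
      (∀ s t, |Φ s - Φ t| ≤ C * |s - t| ^ α) ∧ IsSampledBound p K Φ := by
  set r : ℝ := (1 / 2) ^ (1 / α)
  have hr : 0 < r := by positivity
  have hrα : r ^ α = 1 / 2 := by
    rw [← Real.rpow_mul (by norm_num), one_div_mul_cancel hα.ne', Real.rpow_one]
  have hr2 : r < 1 / 2 :=
    Real.rpow_lt_self_of_lt_one (by norm_num) (by norm_num) (by rwa [one_lt_div hα])
  have hrp : 2 * r ^ (p - 1) < 1 := by
    linarith [Real.rpow_lt_rpow_of_exponent_gt hr (by linarith) hαp]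
  obtain ⟨Φ, hΦ⟩ := exists_isCantor hr hr2
  obtain ⟨C, hC, hholder⟩ := hΦ.exists_holder hα hrα
  obtain ⟨K, hK⟩ := hΦ.exists_isSampledBound (by linarith) hrp
  exact ⟨Φ, C, K, hΦ.toIsRamp, hΦ.denselyConst, hC, hholder, hK⟩

theorem IsBalanced.exists_perturbation (hD : IsBalanced D) (hD' : DenselyConst D)
    (hα : 0 < α) (hα1 : α < 1) (hαp : α < p - 1) (hη : 0 < η) (hS : S.Finite) (hu : 0 ≤ u)
    (huv : u < v) (hv : v ≤ 2 * π) :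
    ∃ D', IsBalanced D' ∧ DenselyConst D' ∧ IsPerturbation p α η D D' ∧ EqOn D' D S ∧
      ∃ s ∈ Icc u v, ∃ t ∈ Icc u v, D' s ≠ D' t := by
  have hp : 1 < p := by linarith
  obtain ⟨Φ, C, K, hΦ, hflat, hC, hholder, hK⟩ := exists_isRamp_isSampledBound hα hα1 hαp
  have hc := continuous_of_abs_sub_le_rpow hα hholder
  obtain ⟨c, δ, hδ, hwindow⟩ := exists_flatWindow hD' hS hu huv hv
  have hsmall : ∀ᶠ τ in 𝓝[>] (0 : ℝ), K * τ ^ (1 - 1 / p) ≤ η := by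
    have he : 0 < 1 - 1 / p := by rw [sub_pos, div_lt_one (by linarith)]; exact hp
    have hlim : Tendsto (fun τ : ℝ => K * τ ^ (1 - 1 / p)) (𝓝 0) (𝓝 (K * 0 ^ (1 - 1 / p))) :=
      (Real.continuousAt_rpow_const 0 _ (.inr he.le)).tendsto.const_mul K
    rw [Real.zero_rpow he.ne', mul_zero] at hlim
    exact nhdsWithin_le_nhds (hlim.eventually_le_const hη)
  obtain ⟨τ, hKτ, hτ, hτ'⟩ := (hsmall.and (Ioc_mem_nhdsGT (lt_min hδ one_pos))).exists
  obtain ⟨hw, hsub⟩ := hwindow τ hτ (hτ'.trans (min_le_left _ _))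
  set A := 4 * C * (τ ^ α)⁻¹
  have hA : 0 ≤ A := by positivity
  have ha : 0 < η / (1 + A) := by positivity
  have haA : η / (1 + A) * A ≤ η := by
    rw [div_mul_eq_mul_div, div_le_iff₀ (by linarith)]
    nlinarith
  refine ⟨_root_.addBump Φ D (η / (1 + A)) c τ, hD.addBump hw hΦ hc _,
    hflat.addBump hD' _ _ hτ,
    hw.isPerturbation_addBump hΦ hc hD.continuous hholder hp.le hK (hτ'.trans (min_le_right _ _))
      hKτ ha.le (div_le_self hη.le (by linarith)) haA,
    fun s hs => hΦ.addBump_of_notMem_Ioo hτ fun h => (hsub (Ioo_subset_Icc_self h)).2 hs,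
    c, Ioo_subset_Icc_self (hsub ⟨le_rfl, by linarith⟩).1,
    c + τ, Ioo_subset_Icc_self (hsub ⟨by linarith, by linarith⟩).1, ?_⟩
  rw [hΦ.addBump_of_notMem_Ioo hτ fun h => h.1.false, _root_.addBump, add_sub_cancel_left,
    div_self hτ.ne', hΦ.bump_of_mem_Icc_zero_one ⟨zero_le_one, le_rfl⟩, hΦ.one 1 le_rfl,
    hw.eq_of_mem (c + τ) ⟨by linarith, by linarith⟩, mul_one]
  linarith

end Construction

section Limit

variable {p α η M : ℝ} {n : ℤ} {D : ℕ → ℝ → ℝ} {L : ℝ → ℝ}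

theorem tendsto_primitive (hD : ∀ j, Continuous (D j)) (hM : ∀ j t, |D j t| ≤ M)
    (hL : ∀ t, Tendsto (D · t) atTop (𝓝 (L t))) (t : ℝ) :
    Tendsto (fun j => primitive (D j) t) atTop (𝓝 (primitive L t)) :=
  intervalIntegral.tendsto_integral_filter_of_dominated_convergence (fun _ => M)
    (.of_forall fun j => (hD j).aestronglyMeasurable)
    (.of_forall fun j => .of_forall fun t _ => hM j t) intervalIntegrable_const
    (.of_forall fun t _ => hL t)

theorem tendsto_fourierCoef_expMap (hD : ∀ j, Continuous (D j)) (hM : ∀ j t, |D j t| ≤ M)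
    (hL : ∀ t, Tendsto (D · t) atTop (𝓝 (L t))) (n k : ℤ) :
    Tendsto (fun j => fourierCoef (expMap (D j) n) k) atTop (𝓝 (fourierCoef (expMap L n) k)) := by
  simp only [fourierCoef_expMap, Pi.smul_apply]
  refine Tendsto.const_smul ?_ _
  refine intervalIntegral.tendsto_integral_filter_of_dominated_convergence (fun _ => 1)
    (.of_forall fun j => ?_) (.of_forall fun j => .of_forall fun t _ => ?_) intervalIntegrable_const
    (.of_forall fun t _ => ?_)
  · have := continuous_primitive (hD j)
    exact Continuous.aestronglyMeasurable (by fun_prop)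
  · exact (Complex.norm_exp_ofReal_mul_I _).le
  · have hcont : Continuous fun x : ℝ => Complex.exp ((n * (t + x) - k * t : ℝ) * Complex.I) := by
      fun_prop
    exact (hcont.tendsto _).comp (tendsto_primitive hD hM hL t)

theorem ApNorm_expMap_le_of_tendsto (hp : 0 < p) (hD : ∀ j, Continuous (D j))
    (hM : ∀ j t, |D j t| ≤ M) (hL : ∀ t, Tendsto (D · t) atTop (𝓝 (L t))) {B : ℝ≥0∞}
    (hB : ∀ j, ApNorm p (expMap (D j) n) ≤ B) : ApNorm p (expMap L n) ≤ B := by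
  simp only [ApNorm_eq_eLpNorm hp] at hB ⊢
  exact Lp.eLpNorm_le_of_ae_tendsto (.of_forall hB) (fun _ => .of_discrete)
    (.of_forall fun k => tendsto_fourierCoef_expMap hD hM hL n k)

theorem IsPerturbation.of_tendsto (hp : 0 < p) (hD : ∀ j, Continuous (D j))
    (hpert : ∀ j, IsPerturbation p α η 0 (D j)) (hL : ∀ t, Tendsto (D · t) atTop (𝓝 (L t))) :
    IsPerturbation p α η 0 L where
  abs_sub_le t := le_of_tendsto' ((hL t).sub_const _).abs fun j => (hpert j).abs_sub_le t
  holder s t := le_of_tendsto' (((hL s).sub_const _).sub ((hL t).sub_const _)).abs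
    fun j => (hpert j).holder s t
  ApNorm_le n := ApNorm_expMap_le_of_tendsto hp hD
    (fun j t => by simpa using (hpert j).abs_sub_le t) hL fun j => (hpert j).ApNorm_le n

theorem IsBalanced.of_tendsto (hD : ∀ j, IsBalanced (D j)) (hM : ∀ j t, |D j t| ≤ M)
    (hL : ∀ t, Tendsto (D · t) atTop (𝓝 (L t))) (hLc : Continuous L) : IsBalanced L where
  continuous := hLc
  eq_zero_of_notMem t ht := tendsto_nhds_unique (hL t) <| by
    simp only [(hD _).eq_zero_of_notMem t ht, tendsto_const_nhds]
  primitive_two_pi :=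
    tendsto_nhds_unique (tendsto_primitive (fun j => (hD j).continuous) hM hL _) <| by
      simp only [(hD _).primitive_two_pi, tendsto_const_nhds]

theorem exists_seq_Icc_subset {a b : ℝ} (hab : a < b) :
    ∃ u v : ℕ → ℝ, (∀ j, a ≤ u j ∧ u j < v j ∧ v j ≤ b) ∧
      ∀ c d, a ≤ c → c < d → d ≤ b → ∃ j, Icc (u j) (v j) ⊆ Icc c d := by
  let T := {q : ℚ × ℚ // a ≤ q.1 ∧ (q.1 : ℝ) < q.2 ∧ q.2 ≤ b}
  have exists_mem (c d : ℝ) (hac : a ≤ c) (hcd : c < d) (hdb : d ≤ b) :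
      ∃ q : T, Icc (q.1.1 : ℝ) q.1.2 ⊆ Icc c d := by
    obtain ⟨x, hcx, hxd⟩ := exists_rat_btwn hcd
    obtain ⟨y, hxy, hyd⟩ := exists_rat_btwn hxd
    exact ⟨⟨(x, y), hac.trans hcx.le, hxy, hyd.le.trans hdb⟩, Icc_subset_Icc hcx.le hyd.le⟩
  have : Nonempty T := ⟨(exists_mem a b le_rfl hab le_rfl).choose⟩
  obtain ⟨q, hq⟩ := exists_surjective_nat T
  refine ⟨fun j => (q j).1.1, fun j => (q j).1.2, fun j => (q j).2, fun c d hac hcd hdb => ?_⟩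
  obtain ⟨x, hx⟩ := exists_mem c d hac hcd hdb
  obtain ⟨j, rfl⟩ := hq x
  exact ⟨j, hx⟩

theorem exists_seq_isPerturbation (hα : 0 < α) (hα1 : α < 1) (hαp : α < p - 1) {ε : ℕ → ℝ}
    (hε : ∀ j, 0 < ε j) {u v : ℕ → ℝ} (huv : ∀ j, 0 ≤ u j ∧ u j < v j ∧ v j ≤ 2 * π) :
    ∃ D : ℕ → ℝ → ℝ, D 0 = 0 ∧ (∀ j, IsBalanced (D j)) ∧
      (∀ j, IsPerturbation p α (ε j) (D j) (D (j + 1))) ∧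
      ∀ j, ∃ s ∈ Icc (u j) (v j), ∃ t ∈ Icc (u j) (v j), D (j + 1) s ≠ D (j + 1) t ∧
        ∀ m > j, D m s = D (j + 1) s ∧ D m t = D (j + 1) t := by
  classical
  -- The finite sets record the points at which all later densities have to agree.
  let State := {D // IsBalanced D ∧ DenselyConst D} × Finset ℝ
  have step (j : ℕ) (x : State) : ∃ y : State, IsPerturbation p α (ε j) x.1 y.1 ∧
      EqOn y.1.1 x.1.1 x.2 ∧ x.2 ⊆ y.2 ∧ ∃ s ∈ Icc (u j) (v j), ∃ t ∈ Icc (u j) (v j),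
        s ∈ y.2 ∧ t ∈ y.2 ∧ y.1.1 s ≠ y.1.1 t := by
    obtain ⟨⟨D, hD, hD'⟩, S⟩ := x
    obtain ⟨D', h₁, h₂, hpert, heq, s, hs, t, ht, hne⟩ := hD.exists_perturbation hD' hα hα1 hαp
      (hε j) S.finite_toSet (huv j).1 (huv j).2.1 (huv j).2.2
    exact ⟨⟨⟨D', h₁, h₂⟩, insert s (insert t S)⟩, hpert, heq,
      (Finset.subset_insert _ _).trans (Finset.subset_insert _ _), s, hs, t, ht, by simp, by simp,
      hne⟩
  choose next hpert heq hsub hsep using step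
  let F : ℕ → State :=
    Nat.rec ⟨⟨0, isBalanced_zero, dense_univ.mono fun _ _ => .const 0⟩, ∅⟩ next
  have hstable (j : ℕ) (s : ℝ) (hs : s ∈ (F (j + 1)).2) (m : ℕ) (hm : j + 1 ≤ m) :
      s ∈ (F m).2 ∧ (F m).1.1 s = (F (j + 1)).1.1 s := by
    induction m, hm using Nat.le_induction with
    | base => exact ⟨hs, rfl⟩
    | succ m _ ih => exact ⟨hsub m _ ih.1, (heq m _ ih.1).trans ih.2⟩
  refine ⟨fun j => (F j).1.1, rfl, fun j => (F j).1.2.1, fun j => hpert j (F j), fun j => ?_⟩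
  obtain ⟨s, hs, t, ht, hsS, htS, hne⟩ := hsep j (F j)
  exact ⟨s, hs, t, ht, hne, fun m hm => ⟨(hstable j s hsS m hm).2, (hstable j t htS m hm).2⟩⟩

theorem isPerturbation_of_forall_succ (hη : 0 ≤ η)
    (hD : ∀ j, IsPerturbation p α (η / 2 / 2 ^ j) (D j) (D (j + 1))) (j : ℕ) :
    IsPerturbation p α η (D 0) (D j) := by
  have hpow (j : ℕ) : 0 ≤ η * (1 - (1 / 2) ^ j) :=
    mul_nonneg hη (sub_nonneg.2 (pow_le_one₀ (by norm_num) (by norm_num)))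
  suffices h : IsPerturbation p α (η * (1 - (1 / 2) ^ j)) (D 0) (D j) from
    h.mono (mul_le_of_le_one_right hη (by simp))
  induction j with
  | zero => simpa using IsPerturbation.refl p α (D 0)
  | succ j ih =>
    convert ih.trans (hD j) (hpow j) (by positivity) using 1
    rw [one_div, inv_pow, inv_pow, pow_succ]
    field_simp
    ring

theorem exists_isBalanced_isPerturbation_zero (hα : 0 < α) (hα1 : α < 1) (hαp : α < p - 1)
    (hη : 0 < η) :
    ∃ L, IsBalanced L ∧ IsPerturbation p α η 0 L ∧
      ∀ u v, 0 ≤ u → u < v → v ≤ 2 * π → ∃ s ∈ Icc u v, ∃ t ∈ Icc u v, L s ≠ L t := by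
  obtain ⟨u, v, huv, hsubset⟩ := exists_seq_Icc_subset two_pi_pos
  obtain ⟨D, hD0, hbal, hstep, hsep⟩ := exists_seq_isPerturbation hα hα1 hαp
    (ε := fun j => η / 2 / 2 ^ j) (fun j => by positivity) huv
  have hpert (j : ℕ) : IsPerturbation p α η 0 (D j) :=
    hD0 ▸ isPerturbation_of_forall_succ hη.le hstep j
  have hlim (t : ℝ) : ∃ l, Tendsto (D · t) atTop (𝓝 l) :=
    cauchySeq_tendsto_of_complete <| cauchySeq_of_le_geometric_two fun j => by
      rw [dist_comm, Real.dist_eq]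
      exact (hstep j).abs_sub_le t
  choose L hL using hlim
  have hLpert := IsPerturbation.of_tendsto (by linarith) (fun j => (hbal j).continuous) hpert hL
  refine ⟨L, .of_tendsto hbal (fun j t => by simpa using (hpert j).abs_sub_le t) hL
    (hLpert.continuous hα), hLpert, fun c d hc hcd hd => ?_⟩
  obtain ⟨j, hj⟩ := hsubset c d hc hcd hd
  obtain ⟨s, hs, t, ht, hne, hstable⟩ := hsep j
  have hLeq (x : ℝ) (hx : ∀ m > j, D m x = D (j + 1) x) : L x = D (j + 1) x :=
    tendsto_nhds_unique (hL x) <| tendsto_const_nhds.congr' <|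
      (eventually_gt_atTop j).mono fun m hm => (hx m hm).symm
  refine ⟨s, hj hs, t, hj ht, ?_⟩
  rwa [hLeq s fun m hm => (hstable m hm).1, hLeq t fun m hm => (hstable m hm).2]

theorem fourierCoef_expMap_zero (n : ℤ) : fourierCoef (expMap 0 n) = Pi.single n 1 := by
  ext k
  rcases eq_or_ne k n with rfl | hk
  · have hpi : (π : ℂ) ≠ 0 := Complex.ofReal_ne_zero.2 pi_ne_zero
    simp [fourierCoef_expMap, partialCoef, primitive]
    field_simp
  · have hnk : ((n - k : ℤ) : ℂ) * Complex.I ≠ 0 :=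
      mul_ne_zero (Int.cast_ne_zero.2 (sub_ne_zero.2 hk.symm)) Complex.I_ne_zero
    have hint : partialCoef 0 n 0 (2 * π) k =
        ∫ t in (0 : ℝ)..(2 * π), Complex.exp (((n - k : ℤ) : ℂ) * Complex.I * t) := by
      unfold partialCoef
      congr 1 with t
      simp only [primitive, Pi.zero_apply, intervalIntegral.integral_zero]
      push_cast
      ring_nf
    have hperiod : ((n - k : ℤ) : ℂ) * Complex.I * ((2 * π : ℝ) : ℂ) =
        ((n - k : ℤ) : ℂ) * (2 * π * Complex.I) := by
      push_cast
      ring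
    rw [fourierCoef_expMap, Pi.smul_apply, hint, integral_exp_mul_complex hnk, hperiod,
      Complex.exp_int_mul_two_pi_mul_I, Pi.single_eq_of_ne hk]
    simp

theorem ApNorm_expMap_zero (hp : 0 < p) (n : ℤ) : ApNorm p (expMap 0 n) = 1 := by
  rw [ApNorm, fourierCoef_expMap_zero, tsum_eq_single n fun k hk => by simp [hk, hp]]
  simp

end Limit

section CircleLift

variable {α η u v x : ℝ} {D : ℝ → ℝ}

/-- The `2π`-periodic function that agrees with `D` on `[0, 2π)`. -/
noncomputable def periodize (D : ℝ → ℝ) (t : ℝ) : ℝ :=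
  D (toIcoMod two_pi_pos 0 t)

theorem periodize_periodic (D : ℝ → ℝ) : Function.Periodic (periodize D) (2 * π) :=
  (toIcoMod_periodic two_pi_pos 0).comp D

theorem periodize_add_zsmul (D : ℝ → ℝ) (t : ℝ) (m : ℤ) :
    periodize D (t + m • (2 * π)) = periodize D t :=
  (periodize_periodic D).zsmul m t

theorem IsBalanced.periodize_of_mem_Icc (hD : IsBalanced D) (hx : x ∈ Icc 0 (2 * π)) :
    periodize D x = D x := by
  rcases hx.2.lt_or_eq with h | rfl
  · rw [periodize, (toIcoMod_eq_self two_pi_pos).2 ⟨hx.1, by rwa [zero_add]⟩]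
  · have hmod : toIcoMod two_pi_pos 0 (2 * π) = 0 := by
      simpa using toIcoMod_apply_right two_pi_pos (0 : ℝ)
    rw [periodize, hmod, hD.eq_zero_of_notMem 0 fun h => h.1.false,
      hD.eq_zero_of_notMem (2 * π) fun h => h.2.false]

theorem two_pi_sub_toIcoMod_add_toIcoMod_le {s t : ℝ} (hst : s ≤ t)
    (hne : toIcoDiv two_pi_pos 0 s ≠ toIcoDiv two_pi_pos 0 t) :
    2 * π - toIcoMod two_pi_pos 0 s + toIcoMod two_pi_pos 0 t ≤ t - s := by
  have hs := toIcoMod_add_toIcoDiv_zsmul two_pi_pos 0 s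
  have ht := toIcoMod_add_toIcoDiv_zsmul two_pi_pos 0 t
  rw [zsmul_eq_mul] at hs ht
  have hlt : toIcoDiv two_pi_pos 0 s < toIcoDiv two_pi_pos 0 t := by
    refine hne.lt_of_le (not_lt.1 fun hlt => ?_)
    have : (toIcoDiv two_pi_pos 0 t : ℝ) + 1 ≤ toIcoDiv two_pi_pos 0 s := by exact_mod_cast hlt
    nlinarith [toIcoMod_mem_Ico' two_pi_pos s |>.1, toIcoMod_mem_Ico' two_pi_pos t |>.2, two_pi_pos]
  have : (toIcoDiv two_pi_pos 0 s : ℝ) + 1 ≤ toIcoDiv two_pi_pos 0 t := by exact_mod_cast hlt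
  nlinarith [two_pi_pos]

theorem IsBalanced.abs_periodize_sub_le (hD : IsBalanced D) (hα : 0 ≤ α) (hη : 0 ≤ η)
    (hholder : ∀ s t, |D s - D t| ≤ η * |s - t| ^ α) (s t : ℝ) :
    |periodize D s - periodize D t| ≤ 2 * η * |s - t| ^ α := by
  wlog hst : s ≤ t generalizing s t
  · rw [abs_sub_comm, abs_sub_comm s]
    exact this t s (le_of_not_ge hst)
  have hs := toIcoMod_mem_Ico' two_pi_pos s
  have ht := toIcoMod_mem_Ico' two_pi_pos t
  have hsep := two_pi_sub_toIcoMod_add_toIcoMod_le hst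
  have hs' := toIcoMod_add_toIcoDiv_zsmul two_pi_pos 0 s
  have ht' := toIcoMod_add_toIcoDiv_zsmul two_pi_pos 0 t
  unfold periodize
  set x := toIcoMod two_pi_pos 0 s
  set y := toIcoMod two_pi_pos 0 t
  rcases eq_or_ne (toIcoDiv two_pi_pos 0 s) (toIcoDiv two_pi_pos 0 t) with heq | hne
  · rw [heq] at hs'
    have hxy := hholder x y
    rw [show x - y = s - t by linarith] at hxy
    linarith [abs_nonneg (D x - D y)]
  specialize hsep hne
  have hst' : |s - t| = t - s := by rw [abs_sub_comm, abs_of_nonneg (by linarith)]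
  -- `D` vanishes at the endpoints, hence at the separating multiple of `2π`.
  have hbound (z w : ℝ) (hw : D w = 0) (hzw : |z - w| ≤ |s - t|) : |D z| ≤ η * |s - t| ^ α :=
    calc |D z| = |D z - D w| := by rw [hw, sub_zero]
      _ ≤ η * |z - w| ^ α := hholder z w
      _ ≤ η * |s - t| ^ α := by gcongr
  have hx : |D x| ≤ η * |s - t| ^ α :=
    hbound x (2 * π) (hD.eq_zero_of_notMem _ fun h => h.2.false) <| by
      rw [hst', abs_sub_comm, abs_of_pos (by linarith [hs.2])]
      linarith [ht.1]
  have hy : |D y| ≤ η * |s - t| ^ α :=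
    hbound y 0 (hD.eq_zero_of_notMem _ fun h => h.1.false) <| by
      rw [hst', sub_zero, abs_of_nonneg ht.1]
      linarith [hs.2]
  linarith [abs_sub (D x) (D y)]

theorem exists_periodize_ne (hD : IsBalanced D)
    (hne : ∀ u v, 0 ≤ u → u < v → v ≤ 2 * π → ∃ s ∈ Icc u v, ∃ t ∈ Icc u v, D s ≠ D t)
    (huv : u < v) : ∃ s ∈ Ioo u v, ∃ t ∈ Ioo u v, periodize D s ≠ periodize D t := by
  have hx := toIcoMod_mem_Ico' two_pi_pos u
  have hu := toIcoMod_add_toIcoDiv_zsmul two_pi_pos 0 u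
  set x := toIcoMod two_pi_pos 0 u
  set m := toIcoDiv two_pi_pos 0 u
  obtain ⟨w, hxw, hw⟩ := exists_between (lt_min hx.2 (by linarith : x < x + (v - u)))
  obtain ⟨z, hwz, hz⟩ := exists_between hw
  rw [lt_min_iff] at hz
  have hmem {s : ℝ} (hs : s ∈ Icc w z) : s + m • (2 * π) ∈ Ioo u v :=
    ⟨by linarith [hs.1], by linarith [hs.2]⟩
  have heq {s : ℝ} (hs : s ∈ Icc w z) : periodize D (s + m • (2 * π)) = D s := by
    rw [periodize_add_zsmul, hD.periodize_of_mem_Icc ⟨by linarith [hs.1, hx.1], by linarith [hs.2]⟩]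
  obtain ⟨s, hs, t, ht, hst⟩ := hne w z (by linarith [hx.1]) hwz hz.1.le
  exact ⟨_, hmem hs, _, hmem ht, by rwa [heq hs, heq ht]⟩

/-- The lift to `ℝ` of the circle map that fixes `0` and has derivative `1 + D` on `[0, 2π]`. -/
noncomputable def circleLift (D : ℝ → ℝ) (t : ℝ) : ℝ :=
  t + primitive (periodize D) t

theorem hasDerivAt_circleLift (hD : Continuous (periodize D)) (t : ℝ) :
    HasDerivAt (circleLift D) (1 + periodize D t) t :=
  (hasDerivAt_id t).fun_add (hasDerivAt_primitive hD t)

theorem contDiff_circleLift (hD : Continuous (periodize D)) : ContDiff ℝ 1 (circleLift D) := by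
  have hderiv : deriv (circleLift D) = fun t => 1 + periodize D t :=
    funext fun t => (hasDerivAt_circleLift hD t).deriv
  refine contDiff_one_iff_deriv.2 ⟨fun t => (hasDerivAt_circleLift hD t).differentiableAt, ?_⟩
  rw [hderiv]
  fun_prop

theorem IsBalanced.primitive_periodize (hD : IsBalanced D) (hx : x ∈ Icc 0 (2 * π)) :
    primitive (periodize D) x = primitive D x :=
  intervalIntegral.integral_congr fun t ht => by
    rw [uIcc_of_le hx.1] at ht
    exact hD.periodize_of_mem_Icc ⟨ht.1, ht.2.trans hx.2⟩

theorem IsBalanced.circleLift_add_two_pi (hD : IsBalanced D) (hc : Continuous (periodize D))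
    (t : ℝ) : circleLift D (t + 2 * π) = circleLift D t + 2 * π := by
  have hperiod : primitive (periodize D) (t + 2 * π) - primitive (periodize D) t = 0 := by
    rw [primitive_sub_primitive hc, (periodize_periodic D).intervalIntegral_add_eq t 0, zero_add,
      ← primitive, hD.primitive_periodize ⟨two_pi_pos.le, le_rfl⟩, hD.primitive_two_pi]
  unfold circleLift
  linarith

theorem IsBalanced.ApNorm_exp_circleLift (hD : IsBalanced D) (p : ℝ) (n : ℤ) :
    ApNorm p (fun t => Complex.exp (Complex.I * n * circleLift D t)) = ApNorm p (expMap D n) := by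
  have hcoef : fourierCoef (fun t => Complex.exp (Complex.I * n * circleLift D t)) =
      fourierCoef (expMap D n) := by
    ext k
    unfold fourierCoef
    congr 1
    refine intervalIntegral.integral_congr fun t ht => ?_
    rw [uIcc_of_le two_pi_pos.le] at ht
    simp only [expMap, circleLift, hD.primitive_periodize ht]
    push_cast
    ring_nf
  rw [ApNorm, ApNorm, hcoef]

theorem not_linear_circleLift (hc : Continuous (periodize D)) {s t : ℝ} (hs : s ∈ Ioo u v)
    (ht : t ∈ Ioo u v) (hne : periodize D s ≠ periodize D t) :
    ¬ ∃ a b : ℝ, ∀ t ∈ Ioo u v, circleLift D t = a * t + b := by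
  rintro ⟨a, b, hab⟩
  have hslope {x : ℝ} (hx : x ∈ Ioo u v) : 1 + periodize D x = a := by
    have hlin : HasDerivAt (fun t => a * t + b) a x := by
      simpa using ((hasDerivAt_id x).const_mul a).add_const b
    exact (hasDerivAt_circleLift hc x).unique <|
      hlin.congr_of_eventuallyEq ((isOpen_Ioo.eventually_mem hx).mono hab)
  exact hne (by linarith [hslope hs, hslope ht])

end CircleLift

section Superposition

variable {p : ℝ} {f : ℝ → ℂ} {h : ℝ → ℝ}

theorem hasSum_fourierCoef_mul_exp (hf : Continuous f) (hper : Function.Periodic f (2 * π))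
    (hsum : Summable (fourierCoef f)) (t : ℝ) :
    HasSum (fun n : ℤ => fourierCoef f n * Complex.exp (Complex.I * n * t)) (f t) := by
  have : Fact (0 < 2 * π) := ⟨two_pi_pos⟩
  let F : C(AddCircle (2 * π), ℂ) := ⟨hper.lift, continuous_coinduced_dom.2 hf⟩
  have hF (x : ℝ) : F (x : AddCircle (2 * π)) = f x := hper.lift_coe x
  have hexp (n : ℤ) (x : ℝ) :
      fourier n (x : AddCircle (2 * π)) = Complex.exp (Complex.I * n * x) := by
    have hpi : (π : ℂ) ≠ 0 := Complex.ofReal_ne_zero.2 pi_ne_zero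
    rw [fourier_coe_apply]
    congr 1
    push_cast
    field_simp
  have hcoeff : fourierCoeff F = fourierCoef f := by
    ext n
    rw [fourierCoeff_eq_intervalIntegral _ n 0, fourierCoef, zero_add, Complex.real_smul]
    push_cast
    congr 2 with x
    rw [hexp, hF, smul_eq_mul, mul_comm]
    push_cast
    ring_nf
  have := has_pointwise_sum_fourier_series_of_summable (f := F) (hcoeff ▸ hsum) t
  simpa only [hcoeff, hF, hexp, smul_eq_mul] using this

theorem hasSum_fourierCoef_comp (hf : Continuous f) (hper : Function.Periodic f (2 * π))
    (hsum : Summable (fourierCoef f)) (hh : Continuous h) (k : ℤ) :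
    HasSum (fun n : ℤ => fourierCoef f n *
      fourierCoef (fun t => Complex.exp (Complex.I * n * h t)) k)
      (fourierCoef (fun t => f (h t)) k) := by
  have hint := intervalIntegral.hasSum_integral_of_dominated_convergence (μ := volume) (a := 0)
    (b := 2 * π) (F := fun (n : ℤ) t => fourierCoef f n * Complex.exp (Complex.I * n * h t) *
      Complex.exp (-Complex.I * k * t))
    (f := fun t => f (h t) * Complex.exp (-Complex.I * k * t)) (fun n _ => ‖fourierCoef f n‖)
    (fun n => Continuous.aestronglyMeasurable (by fun_prop))
    (fun n => .of_forall fun t _ => ?_) (.of_forall fun _ _ => hsum.norm) intervalIntegrable_const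
    (.of_forall fun t _ => (hasSum_fourierCoef_mul_exp hf hper hsum (h t)).mul_right _)
  · refine (hint.mul_left (1 / (2 * (π : ℂ)))).congr_fun fun n => ?_
    rw [fourierCoef.eq_def (fun t => Complex.exp _), mul_left_comm,
      ← intervalIntegral.integral_const_mul]
    simp only [mul_assoc]
  · simp [Complex.norm_exp]

theorem ApNorm_comp_le (hp : 1 ≤ p) (hh : Continuous h) {B : ℝ≥0∞} (hB0 : B ≠ 0)
    (hB : ∀ n : ℤ, ApNorm p (fun t => Complex.exp (Complex.I * n * h t)) ≤ B) (hf : Continuous f)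
    (hper : Function.Periodic f (2 * π)) : ApNorm p (fun t => f (h t)) ≤ B * ApNorm 1 f := by
  have hnorm : ApNorm 1 f = ∑' n, ‖fourierCoef f n‖ₑ := by simp [ApNorm, enorm_eq_nnnorm]
  rw [hnorm]
  by_cases htop : ∑' n, ‖fourierCoef f n‖ₑ = ⊤
  · rw [htop, ENNReal.mul_top hB0]
    exact le_top
  have hsum : Summable (fourierCoef f) :=
    .of_nnnorm (ENNReal.tsum_coe_ne_top_iff_summable.1 htop)
  simp only [ApNorm_eq_eLpNorm (by linarith : 0 < p)] at hB ⊢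
  set c : ℤ → ℤ → ℂ := fun n => fourierCoef fun t => Complex.exp (Complex.I * n * h t)
  refine Lp.eLpNorm_le_of_ae_tendsto (u := atTop) (f := fun N => ∑ n ∈ N, fourierCoef f n • c n)
    (.of_forall fun N => ?_) (fun _ => .of_discrete) (.of_forall fun k => ?_)
  · calc _ ≤ ∑ n ∈ N, eLpNorm (fourierCoef f n • c n) (ENNReal.ofReal p) .count :=
          eLpNorm_sum_le (fun _ _ => .of_discrete) (by simpa using hp)
      _ ≤ ∑ n ∈ N, B * ‖fourierCoef f n‖ₑ := by
          gcongr with n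
          rw [eLpNorm_const_smul, mul_comm]
          gcongr
          exact hB n
      _ ≤ B * ∑' n, ‖fourierCoef f n‖ₑ := by
          rw [← Finset.mul_sum]
          gcongr
          exact ENNReal.sum_le_tsum N
  · simp only [Finset.sum_apply, Pi.smul_apply, smul_eq_mul]
    exact hasSum_fourierCoef_comp hf hper hsum hh k

end Superposition

theorem statement19_general {p α B : ℝ} (hα : 0 < α) (hα1 : α < 1) (hαp : α < p - 1) (hB : 1 < B) :
    ∃ h : ℝ → ℝ,
      ContDiff ℝ 1 h ∧
      (∀ t, h (t + 2 * π) = h t + 2 * π) ∧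
      StrictMono h ∧
      (∀ t, 0 < deriv h t) ∧
      (∃ C, 0 < C ∧ ∀ s t, |deriv h s - deriv h t| ≤ C * |s - t| ^ α) ∧
      (∀ u v, u < v → ¬ ∃ a b : ℝ, ∀ t ∈ Ioo u v, h t = a * t + b) ∧
      (∀ n : ℤ, ApNorm p (fun t => Complex.exp (Complex.I * n * h t)) ≤ ENNReal.ofReal B) ∧
      ∀ f : ℝ → ℂ, Continuous f → Function.Periodic f (2 * π) →
        ApNorm p (fun t => f (h t)) ≤ ENNReal.ofReal B * ApNorm 1 f := by
  set η := min (B - 1) (1 / 2)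
  have hη : 0 < η := lt_min (by linarith) (by norm_num)
  obtain ⟨L, hL, hpert, hne⟩ := exists_isBalanced_isPerturbation_zero hα hα1 hαp hη
  have hholder := hL.abs_periodize_sub_le hα.le hη.le fun s t => by simpa using hpert.holder s t
  have hc : Continuous (periodize L) := continuous_of_abs_sub_le_rpow hα hholder
  have hderiv t : deriv (circleLift L) t = 1 + periodize L t := (hasDerivAt_circleLift hc t).deriv
  have hpos t : 0 < deriv (circleLift L) t := by
    have hsmall : |periodize L t| ≤ η := by simpa [periodize] using hpert.abs_sub_le _
    linarith [hderiv t, neg_abs_le (periodize L t), min_le_right (B - 1) (1 / 2 : ℝ)]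
  have hbound (n : ℤ) :
      ApNorm p (fun t => Complex.exp (Complex.I * n * circleLift L t)) ≤ ENNReal.ofReal B :=
    calc _ ≤ 1 + ENNReal.ofReal η := by
          rw [hL.ApNorm_exp_circleLift, ← ApNorm_expMap_zero (by linarith : 0 < p) n]
          exact hpert.ApNorm_le n
      _ = ENNReal.ofReal (1 + η) := by rw [ENNReal.ofReal_add zero_le_one hη.le, ENNReal.ofReal_one]
      _ ≤ ENNReal.ofReal B :=
          ENNReal.ofReal_le_ofReal (by linarith [min_le_left (B - 1) (1 / 2 : ℝ)])
  refine ⟨circleLift L, contDiff_circleLift hc, hL.circleLift_add_two_pi hc,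
    strictMono_of_deriv_pos hpos, hpos, ⟨2 * η, by positivity, fun s t => ?_⟩, fun u v huv => ?_,
    hbound, fun f => ApNorm_comp_le (by linarith) (contDiff_circleLift hc).continuous ?_ hbound⟩
  · simpa only [hderiv, add_sub_add_left_eq_sub] using hholder s t
  · obtain ⟨s, hs, t, ht, hst⟩ := exists_periodize_ne hL hne huv
    exact not_linear_circleLift hc hs ht hst
  · exact ENNReal.ofReal_ne_zero_iff.2 (by linarith)

/-- for 1 < p < 2 and ε > 0 with p − 1 − ε > 0, there exists a nowhere
linear C^{1,p−1−ε}-diffeomorphism h of the circle with sup_n ‖e^{inh}‖_{A_p} < ∞;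
consequently f ↦ f∘h is bounded from A(𝕋) to A_p(𝕋). -/
theorem statement19
    (p ε : ℝ) (hp1 : 1 < p) (hp2 : p < 2) (hε : 0 < ε) (hpε : 0 < p - 1 - ε) :
    ∃ h : ℝ → ℝ,
      -- h is a C^{1,p−1−ε}-diffeomorphism of the circle
      ContDiff ℝ 1 h ∧
      (∀ t : ℝ, h (t + 2 * Real.pi) = h t + 2 * Real.pi) ∧
      StrictMono h ∧
      (∀ t : ℝ, 0 < deriv h t) ∧
      (∃ C : ℝ, 0 < C ∧ ∀ s t : ℝ, |deriv h s - deriv h t| ≤ C * |s - t| ^ (p - 1 - ε)) ∧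
      -- h is nowhere linear
      (∀ u v : ℝ, u < v → ¬ ∃ a b : ℝ, ∀ t ∈ Ioo u v, h t = a * t + b) ∧
      (∃ B : ℝ, 0 < B ∧
        -- sup_n ‖e^{inh}‖_{A_p} < ∞
        (∀ n : ℤ,
          ApNorm p (fun t => Complex.exp (Complex.I * (n : ℂ) * (h t : ℂ))) ≤
            ENNReal.ofReal B) ∧
        -- the superposition operator f ↦ f∘h is bounded from A(𝕋) to A_p(𝕋)
        (∀ f : ℝ → ℂ, Continuous f → Function.Periodic f (2 * Real.pi) →
          ApNorm p (fun t => f (h t)) ≤ ENNReal.ofReal B * ApNorm 1 f)) := by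
  obtain ⟨h, hdiff, hlift, hmono, hderiv, hholder, hnonlin, hbound⟩ :=
    statement19_general (p := p) hpε (by linarith) (by linarith) one_lt_two
  exact ⟨h, hdiff, hlift, hmono, hderiv, hholder, hnonlin, 2, two_pos, hbound⟩
end
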